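/- arXiv:1910.00750 — 5 statements merged into one kernel-verified Lean document; each statement's English description precedes it below -/
import Mathlib

section
/- Let d ≥ 1. Then ∫_{ℝ^d} ‖x‖^{-d} J_{d/2}(‖x‖)² dx = ω_d, where ω_d = π^{d/2}/Γ(1 + d/2) is the volume of the unit ball in ℝ^d. Equivalently, the function ℓ_1(x) = ω_d^{-1} ‖x‖^{-d} J_{d/2}(‖x‖)² has integral 1 over ℝ^d. -/
/-!
In polar coordinates the integral is `d · ω_d · ∫_0^∞ J_ν(r)² dr / r` with `ν = d/2`, so the claim
is `∫_0^∞ 2ν J_ν(r)² dr / r = 1` for `ν > 0` with `2ν ∈ ℕ`.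

The recurrences `(r^{-ν} J_ν)' = -r^{-ν} J_{ν+1}` and `J_{ν+2} = (2(ν+1)/r) J_{ν+1} - J_ν` follow
from Poisson's integral by integration by parts, and give
`(J_ν² + J_{ν+1}²)' = (2ν J_ν² - 2(ν+1) J_{ν+1}²) / r` (`hasDerivAt_energy`). Bessel functions
vanish at infinity (`tendsto_energy`), and at `0` when `ν > 0`, so `∫_0^∞ 2ν J_ν² dr / r` does not
change under `ν ↦ ν + 1`. For `ν = 0` the boundary term `J_0(0)² = 1` gives the value `1` at `ν = 1`.
For `ν = 1/2` the value is `(2/π) ∫_0^∞ sin² r / r² dr`, which is `1` by comparison with the Fejér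
kernel (`tendsto_integral_sinc_sq`).

Powers of `r` are kept outside the integrals: everything is written in terms of
`p_m(r) = ∫_0^π sin^m θ cos(r cos θ) dθ` with `m = 2ν ∈ ℕ`, which is smooth at `r = 0`.
-/

open MeasureTheory Filter Metric
open scoped Topology

/-- Bessel function of the first kind of order `ν`, via Poisson's integral
representation `J_ν(x) = ((x/2)^ν / (√π Γ(ν + 1/2))) ∫_0^π (sin θ)^{2ν} cos(x cos θ) dθ`. -/
noncomputable def besselJ (ν : ℝ) (x : ℝ) : ℝ :=
  ((x / 2) ^ ν / (Real.sqrt Real.pi * Real.Gamma (ν + 1 / 2))) *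
    ∫ θ in (0 : ℝ)..Real.pi, Real.sin θ ^ (2 * ν) * Real.cos (x * Real.cos θ)

/-! ### Poisson's integral and its recurrences -/

/-- The integral in Poisson's representation of `J_{m/2}`, with the exponent `2ν = m` a natural
number: `p_m(r) = ∫_0^π sin^m θ cos(r cos θ) dθ`. -/
noncomputable def poissonInt (m : ℕ) (r : ℝ) : ℝ :=
  ∫ θ in (0 : ℝ)..Real.pi, Real.sin θ ^ m * Real.cos (r * Real.cos θ)

/-- `q_m(r) = ∫_0^π sin^m θ cos θ sin(r cos θ) dθ`, the negative of `p_m'(r)`. -/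
noncomputable def poissonInt' (m : ℕ) (r : ℝ) : ℝ :=
  ∫ θ in (0 : ℝ)..Real.pi, Real.sin θ ^ m * (Real.cos θ * Real.sin (r * Real.cos θ))

/-- The integral over `[0, π]` of the derivative of `sin^{m+1} θ sin(r cos θ)` vanishes. -/
lemma poissonInt'_eq (m : ℕ) (r : ℝ) :
    (m + 1) * poissonInt' m r = r * poissonInt (m + 2) r := by
  have h := intervalIntegral.integral_eq_sub_of_hasDerivAt (a := 0) (b := Real.pi)
    (f := fun θ => Real.sin θ ^ (m + 1) * Real.sin (r * Real.cos θ))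
    (f' := fun θ => (m + 1) * (Real.sin θ ^ m * (Real.cos θ * Real.sin (r * Real.cos θ)))
      - r * (Real.sin θ ^ (m + 2) * Real.cos (r * Real.cos θ)))
    (fun θ _ => by
      have := ((Real.hasDerivAt_sin θ).pow (m + 1)).mul
        ((((Real.hasDerivAt_cos θ).const_mul r)).sin)
      convert! this using 1
      simp only [Pi.pow_apply, Nat.add_sub_cancel]
      push_cast
      ring)
    (Continuous.intervalIntegrable (by fun_prop) _ _)
  rw [intervalIntegral.integral_sub (Continuous.intervalIntegrable (by fun_prop) _ _)
    (Continuous.intervalIntegrable (by fun_prop) _ _), intervalIntegral.integral_const_mul,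
    intervalIntegral.integral_const_mul] at h
  simp only [Real.sin_pi, Real.sin_zero, ne_eq, Nat.succ_ne_zero, not_false_eq_true, zero_pow,
    zero_mul, sub_zero] at h
  unfold poissonInt' poissonInt
  linarith

/-- Three-term recurrence, equivalent to `J_{ν+2}(r) = (2(ν+1)/r) J_{ν+1}(r) - J_ν(r)`. It is the
vanishing of the integral over `[0, π]` of the derivative of `sin^{m+1} θ cos θ cos(r cos θ)`. -/
lemma poissonInt_rec (m : ℕ) (r : ℝ) :
    r ^ 2 * poissonInt (m + 4) r =
      (m + 3) * ((m + 2) * poissonInt (m + 2) r - (m + 1) * poissonInt m r) := by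
  have h := intervalIntegral.integral_eq_sub_of_hasDerivAt (a := 0) (b := Real.pi)
    (f := fun θ => Real.sin θ ^ (m + 1) * (Real.cos θ * Real.cos (r * Real.cos θ)))
    (f' := fun θ => (m + 1) * (Real.sin θ ^ m * Real.cos (r * Real.cos θ))
      - (m + 2) * (Real.sin θ ^ (m + 2) * Real.cos (r * Real.cos θ))
      + r * (Real.sin θ ^ (m + 2) * (Real.cos θ * Real.sin (r * Real.cos θ))))
    (fun θ _ => by
      have := ((Real.hasDerivAt_sin θ).pow (m + 1)).mul
        ((Real.hasDerivAt_cos θ).mul (((Real.hasDerivAt_cos θ).const_mul r)).cos)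
      convert! this using 1
      simp only [Pi.pow_apply, Pi.mul_apply, Nat.add_sub_cancel]
      push_cast
      have hc : Real.sin θ ^ (m + 2) = Real.sin θ ^ m * (1 - Real.cos θ ^ 2) := by
        rw [← Real.sin_sq]; ring
      have hc' : Real.sin θ ^ (m + 1) * Real.sin θ = Real.sin θ ^ m * (1 - Real.cos θ ^ 2) := by
        rw [← Real.sin_sq]; ring
      linear_combination (-Real.cos (r * Real.cos θ) * (m + 2) +
        r * Real.cos θ * Real.sin (r * Real.cos θ)) * hc +
        (Real.cos (r * Real.cos θ) - r * Real.cos θ * Real.sin (r * Real.cos θ)) * hc')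
    (Continuous.intervalIntegrable (by fun_prop) _ _)
  rw [intervalIntegral.integral_add (Continuous.intervalIntegrable (by fun_prop) _ _)
    (Continuous.intervalIntegrable (by fun_prop) _ _),
    intervalIntegral.integral_sub (Continuous.intervalIntegrable (by fun_prop) _ _)
    (Continuous.intervalIntegrable (by fun_prop) _ _), intervalIntegral.integral_const_mul,
    intervalIntegral.integral_const_mul, intervalIntegral.integral_const_mul] at h
  simp only [Real.sin_pi, Real.sin_zero, ne_eq, Nat.succ_ne_zero, not_false_eq_true, zero_pow,
    zero_mul, sub_zero] at h
  have h2 := poissonInt'_eq (m + 2) r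
  change (m + 1) * poissonInt m r - (m + 2) * poissonInt (m + 2) r +
    r * poissonInt' (m + 2) r = 0 at h
  push_cast at h2
  linear_combination (-r) * h2 + ((m : ℝ) + 3) * h

/-- The Poisson-integral form of `(r^{-ν} J_ν)' = -r^{-ν} J_{ν+1}`. -/
lemma hasDerivAt_poissonInt (m : ℕ) (r : ℝ) :
    HasDerivAt (poissonInt m) (-(r * poissonInt (m + 2) r) / (m + 1)) r := by
  have h := (intervalIntegral.hasDerivAt_integral_of_dominated_loc_of_deriv_le
    (μ := volume) (a := 0) (b := Real.pi) (x₀ := r) (s := Set.univ) (bound := fun _ => 1)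
    (F := fun r θ => Real.sin θ ^ m * Real.cos (r * Real.cos θ))
    (F' := fun r θ => -(Real.sin θ ^ m * (Real.cos θ * Real.sin (r * Real.cos θ))))
    Filter.univ_mem (Eventually.of_forall fun r => Continuous.aestronglyMeasurable (by fun_prop))
    (Continuous.intervalIntegrable (by fun_prop) _ _)
    (Continuous.aestronglyMeasurable (by fun_prop))
    (Eventually.of_forall fun θ _ r _ => by
      rw [norm_neg, norm_mul, norm_mul, norm_pow]
      have h1 : ‖Real.sin θ‖ ^ m ≤ 1 := pow_le_one₀ (norm_nonneg _) (Real.abs_sin_le_one θ)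
      have h2 : ‖Real.cos θ‖ * ‖Real.sin (r * Real.cos θ)‖ ≤ 1 :=
        mul_le_one₀ (Real.abs_cos_le_one θ) (norm_nonneg _) (Real.abs_sin_le_one _)
      exact mul_le_one₀ h1 (by positivity) h2)
    (Continuous.intervalIntegrable (by fun_prop) _ _)
    (Eventually.of_forall fun θ _ r _ => by
      have := ((((hasDerivAt_id r).mul_const (Real.cos θ))).cos).const_mul (Real.sin θ ^ m)
      convert! this using 1
      simp only [id]
      ring)).2
  convert! h using 1
  rw [intervalIntegral.integral_neg]
  change _ = -poissonInt' m r
  have := poissonInt'_eq m r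
  have hm : (m : ℝ) + 1 ≠ 0 := by positivity
  field_simp
  linarith

lemma continuous_poissonInt (m : ℕ) : Continuous (poissonInt m) :=
  continuous_iff_continuousAt.2 fun r => (hasDerivAt_poissonInt m r).continuousAt

/-- Up to a constant factor, this is `J_ν² + J_{ν+1}²` with `ν = m/2`. -/
noncomputable def energy (m : ℕ) (r : ℝ) : ℝ :=
  r ^ m * poissonInt m r ^ 2 + r ^ (m + 2) * poissonInt (m + 2) r ^ 2 / (m + 1) ^ 2

/-- Up to a constant factor, this is `2ν J_ν(r)² / r` with `ν = m/2`. -/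
noncomputable def dens (m : ℕ) (r : ℝ) : ℝ := m * r ^ (m - 1) * poissonInt m r ^ 2

lemma continuous_dens (m : ℕ) : Continuous (dens m) := by
  have := continuous_poissonInt m
  unfold dens
  fun_prop

/-- The identity `(J_ν² + J_{ν+1}²)' = (2ν J_ν² - 2(ν+1) J_{ν+1}²) / r`. -/
lemma hasDerivAt_energy (m : ℕ) (r : ℝ) :
    HasDerivAt (energy m) (dens m r - dens (m + 2) r / (m + 1) ^ 2) r := by
  have h := ((hasDerivAt_pow m r).mul ((hasDerivAt_poissonInt m r).pow 2)).add
    (((hasDerivAt_pow (m + 2) r).mul ((hasDerivAt_poissonInt (m + 2) r).pow 2)).div_const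
      (((m : ℝ) + 1) ^ 2))
  convert! h using 1
  have hr := poissonInt_rec m r
  have hm : (m : ℝ) + 1 ≠ 0 := by positivity
  have hm3 : (m : ℝ) + 3 ≠ 0 := by positivity
  have hm3' : (m : ℝ) + 2 + 1 ≠ 0 := by positivity
  unfold dens
  simp only [show m + 2 - 1 = m + 1 by omega, show m + 2 + 2 = m + 4 by omega, Nat.cast_add,
    Nat.cast_ofNat, pow_one, show 2 - 1 = 1 by omega, Pi.pow_apply]
  have e : -(r * poissonInt (m + 4) r) / ((m : ℝ) + 2 + 1) * r =
      -((m + 2) * poissonInt (m + 2) r - (m + 1) * poissonInt m r) := by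
    rw [div_mul_eq_mul_div, div_eq_iff hm3']
    linear_combination -hr
  have e2 : r ^ (m + 2) * (2 * poissonInt (m + 2) r *
      (-(r * poissonInt (m + 4) r) / ((m : ℝ) + 2 + 1))) =
      -2 * r ^ (m + 1) * poissonInt (m + 2) r *
        ((m + 2) * poissonInt (m + 2) r - (m + 1) * poissonInt m r) := by
    linear_combination (2 * r ^ (m + 1) * poissonInt (m + 2) r) * e
  rw [e2]
  field_simp
  ring

lemma integral_dens (m : ℕ) (R : ℝ) :
    (∫ r in (0 : ℝ)..R, dens m r) - (∫ r in (0 : ℝ)..R, dens (m + 2) r) / (m + 1) ^ 2 =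
      energy m R - energy m 0 := by
  have h1 := continuous_dens m
  have h2 := continuous_dens (m + 2)
  rw [← intervalIntegral.integral_eq_sub_of_hasDerivAt (fun r _ => hasDerivAt_energy m r)
    (Continuous.intervalIntegrable (by fun_prop) _ _),
    intervalIntegral.integral_sub (h1.intervalIntegrable _ _)
    (Continuous.intervalIntegrable (by fun_prop) _ _), intervalIntegral.integral_div]

/-- The order `1/2` case is elementary: `J_{1/2}(r)² = (2/π) sin² r / r`. -/
lemma poissonInt_one (r : ℝ) : poissonInt 1 r = 2 * Real.sinc r := by
  by_cases hr : r = 0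
  · subst hr
    simp [poissonInt]
    norm_num
  have h := intervalIntegral.integral_eq_sub_of_hasDerivAt (a := 0) (b := Real.pi)
    (f := fun θ => -Real.sin (r * Real.cos θ) / r)
    (f' := fun θ => Real.sin θ ^ 1 * Real.cos (r * Real.cos θ))
    (fun θ _ => by
      have := ((((Real.hasDerivAt_cos θ).const_mul r)).sin).neg.div_const r
      convert! this using 1
      field_simp)
    (Continuous.intervalIntegrable (by fun_prop) _ _)
  rw [poissonInt, h, Real.sinc_of_ne_zero hr]
  simp only [Real.cos_pi, Real.cos_zero, mul_neg, mul_one, Real.sin_neg]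
  ring

/-! ### Decay at infinity -/

/-- Decay of `J_0² + J_1²`. By Bessel's equation `r (J_0² + J_1²) - J_0 J_1 + J_0² / (2r)` has
derivative `-J_0² / (2r²) ≤ 0`, so it is bounded for `r ≥ 1`, while it is at least
`(r - 1/2) (J_0² + J_1²)`. -/
lemma tendsto_energy_zero : Tendsto (energy 0) atTop (𝓝 0) := by
  set P := poissonInt 0
  set Q := fun r => r * poissonInt 2 r with hQ
  have dP : ∀ r, HasDerivAt P (-Q r) r := fun r => by
    have := hasDerivAt_poissonInt 0 r
    simpa using this
  have dQ : ∀ r, r ≠ 0 → HasDerivAt Q (P r - Q r / r) r := fun r hr => by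
    have := (hasDerivAt_id r).mul (hasDerivAt_poissonInt 2 r)
    convert! this using 1
    have h := poissonInt_rec 0 r
    simp only [hQ, P, id] at *
    norm_num at h ⊢
    field_simp
    linarith
  set E := fun r => r * P r ^ 2 + r * Q r ^ 2 - P r * Q r + P r ^ 2 / (2 * r) with hE
  have dE : ∀ r, 0 < r → HasDerivAt E (-(P r ^ 2 / (2 * r ^ 2))) r := fun r hr => by
    have h1 := (dP r).pow 2
    have h2 := (dQ r hr.ne').pow 2
    have h3 := (dP r).mul (dQ r hr.ne')
    have hid := hasDerivAt_id r
    have := (((hid.mul h1).add (hid.mul h2)).sub h3).add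
      (h1.div (hid.const_mul 2) (by simpa using hr.ne'))
    convert! this using 1
    simp only [id, Pi.pow_apply]
    field_simp
    ring
  have anti : AntitoneOn E (Set.Ici 1) := by
    apply antitoneOn_of_deriv_nonpos (convex_Ici 1)
    · intro r hr
      exact (dE r (by simp at hr; linarith)).continuousAt.continuousWithinAt
    · intro r hr
      rw [interior_Ici] at hr
      exact (dE r (by simp at hr; linarith)).differentiableAt.differentiableWithinAt
    · intro r hr
      rw [interior_Ici] at hr
      rw [(dE r (by simp at hr; linarith)).deriv]
      exact neg_nonpos.2 (by positivity)
  have eq : ∀ r, energy 0 r = P r ^ 2 + Q r ^ 2 := fun r => by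
    simp only [energy, hQ, P]
    norm_num
    ring
  have lim : Tendsto (fun r : ℝ => E 1 / (r - 1 / 2)) atTop (𝓝 0) :=
    Tendsto.div_atTop tendsto_const_nhds (tendsto_atTop_add_const_right _ _ tendsto_id)
  refine tendsto_of_tendsto_of_tendsto_of_le_of_le' tendsto_const_nhds lim
    (Eventually.of_forall fun r => by rw [eq]; positivity) ?_
  filter_upwards [eventually_ge_atTop 1] with r hr
  rw [eq, le_div_iff₀ (by linarith)]
  have h1 : E r ≤ E 1 := anti (by simp) (by simpa using hr) hr
  have h2 : 0 ≤ P r ^ 2 / (2 * r) := by positivity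
  simp only [hE] at h1 ⊢
  nlinarith [sq_nonneg (P r - Q r)]

/-- `J_ν(r) → 0` as `r → ∞`, for `ν = m/2`. -/
lemma tendsto_pow_mul_poissonInt_sq (m : ℕ) :
    Tendsto (fun r => r ^ m * poissonInt m r ^ 2) atTop (𝓝 0) := by
  have inv0 : Tendsto (fun r : ℝ => r⁻¹) atTop (𝓝 0) := tendsto_inv_atTop_zero
  have inv2 : Tendsto (fun r : ℝ => (r ^ 2)⁻¹) atTop (𝓝 0) := by
    simpa using inv0.pow 2
  -- The recurrence expresses the decay of order `m + 4` through that of orders `m` and `m + 2`.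
  suffices H : Tendsto (fun r => r ^ m * poissonInt m r ^ 2) atTop (𝓝 0) ∧
      Tendsto (fun r => r ^ (m + 2) * poissonInt (m + 2) r ^ 2) atTop (𝓝 0) from H.1
  induction m using Nat.twoStepInduction with
  | zero =>
    have h := tendsto_energy_zero
    constructor
    · refine squeeze_zero' (Eventually.of_forall fun r => by positivity)
        (Eventually.of_forall fun r => ?_) h
      simp only [energy]
      norm_num
      positivity
    · refine squeeze_zero' (Eventually.of_forall fun r => by rw [zero_add]; positivity)
        (Eventually.of_forall fun r => ?_) h
      simp only [energy]
      norm_num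
      positivity
  | one =>
    constructor
    · have : Tendsto (fun r : ℝ => 4 * r⁻¹) atTop (𝓝 0) := by simpa using inv0.const_mul 4
      refine tendsto_of_tendsto_of_tendsto_of_le_of_le' tendsto_const_nhds this ?_ ?_
      · filter_upwards [eventually_gt_atTop 0] with r hr
        positivity
      · filter_upwards [eventually_gt_atTop 0] with r hr
        rw [poissonInt_one, Real.sinc_of_ne_zero hr.ne']
        have := Real.sin_sq_le_one r
        field_simp
        linarith
    · have : Tendsto (fun r : ℝ => 64 * r⁻¹) atTop (𝓝 0) := by simpa using inv0.const_mul 64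
      refine tendsto_of_tendsto_of_tendsto_of_le_of_le' tendsto_const_nhds this ?_ ?_
      · filter_upwards [eventually_gt_atTop 0] with r hr
        positivity
      · filter_upwards [eventually_ge_atTop 1] with r hr
        have hr0 : 0 < r := by linarith
        have h1 := hasDerivAt_poissonInt 1 r
        have h2 : HasDerivAt (poissonInt 1)
            (2 * ((Real.cos r * r - Real.sin r * 1) / r ^ 2)) r := by
          refine HasDerivAt.congr_of_eventuallyEq
            (((Real.hasDerivAt_sin r).div (hasDerivAt_id r) hr0.ne').const_mul 2) ?_
          filter_upwards [eventually_ne_nhds hr0.ne'] with x hx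
          rw [poissonInt_one, Real.sinc_of_ne_zero hx]
          rfl
        have h3 := h1.unique h2
        have h4 : r ^ 3 * poissonInt 3 r = 4 * (Real.sin r - r * Real.cos r) := by
          norm_num at h3
          field_simp at h3
          linarith
        have h5 : (r ^ 3 * poissonInt 3 r) ^ 2 ≤ 64 * r ^ 2 := by
          rw [h4]
          nlinarith [Real.sin_sq_le_one r, Real.cos_sq_le_one r,
            sq_nonneg (Real.sin r + r * Real.cos r),
            mul_le_mul_of_nonneg_left (Real.cos_sq_le_one r) (sq_nonneg r)]
        have h6 : r ^ 4 * (r ^ 2 * poissonInt 3 r ^ 2) ≤ r ^ 2 * 64 := by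
          calc r ^ 4 * (r ^ 2 * poissonInt 3 r ^ 2) = (r ^ 3 * poissonInt 3 r) ^ 2 := by ring
            _ ≤ _ := by linarith
        rw [← div_eq_mul_inv, le_div_iff₀ hr0]
        have h7 : r ^ 2 * (r ^ 4 * poissonInt 3 r ^ 2) ≤ r ^ 2 * 64 := by linarith
        have h8 := le_of_mul_le_mul_left h7 (by positivity)
        calc _ = r ^ 4 * poissonInt 3 r ^ 2 := by ring
          _ ≤ 64 := h8
  | more m ih _ =>
    obtain ⟨h0, h2⟩ := ih
    refine ⟨h2, ?_⟩
    have h3 : Tendsto (fun r => 2 * ((m : ℝ) + 3) ^ 2 * ((m + 2) ^ 2 *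
        (r ^ (m + 2) * poissonInt (m + 2) r ^ 2 * (r ^ 2)⁻¹)
        + (m + 1) ^ 2 * (r ^ m * poissonInt m r ^ 2))) atTop (𝓝 0) := by
      simpa using ((((h2.mul inv2).const_mul (((m : ℝ) + 2) ^ 2)).add
        (h0.const_mul (((m : ℝ) + 1) ^ 2))).const_mul (2 * ((m : ℝ) + 3) ^ 2))
    refine tendsto_of_tendsto_of_tendsto_of_le_of_le' tendsto_const_nhds h3 ?_ ?_
    · filter_upwards [eventually_gt_atTop 0] with r hr
      positivity
    · filter_upwards [eventually_gt_atTop 0] with r hr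
      have h := poissonInt_rec m r
      have e1 : r ^ (m + 2 + 2) * poissonInt (m + 2 + 2) r ^ 2 =
          r ^ m * (r ^ 2 * poissonInt (m + 4) r) ^ 2 := by ring
      have e2 : r ^ (m + 2) * poissonInt (m + 2) r ^ 2 * (r ^ 2)⁻¹ =
          r ^ m * poissonInt (m + 2) r ^ 2 := by field_simp; ring
      rw [e1, e2, h]
      have := mul_nonneg (mul_nonneg (pow_nonneg hr.le m) (sq_nonneg ((m : ℝ) + 3)))
        (sq_nonneg ((m + 2) * poissonInt (m + 2) r + (m + 1) * poissonInt m r))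
      linarith

lemma tendsto_energy (m : ℕ) : Tendsto (energy m) atTop (𝓝 0) := by
  have := (tendsto_pow_mul_poissonInt_sq m).add
    ((tendsto_pow_mul_poissonInt_sq (m + 2)).div_const (((m : ℝ) + 1) ^ 2))
  rw [zero_div, add_zero] at this
  exact this

/-! ### The integral of `(sin r / r)²` -/

/-- The Dirichlet kernel `1 + 2 ∑_{k=1}^n cos(2kx)`. -/
noncomputable def dirKer (n : ℕ) (x : ℝ) : ℝ :=
  1 + 2 * ∑ k ∈ Finset.range n, Real.cos (2 * (k + 1) * x)

/-- The (unnormalised) Fejér kernel `sin²(nx) / sin² x`. -/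
noncomputable def fejKer (n : ℕ) (x : ℝ) : ℝ := ∑ j ∈ Finset.range n, dirKer j x

lemma dirKer_mul_sin (n : ℕ) (x : ℝ) :
    dirKer n x * Real.sin x = Real.sin ((2 * n + 1) * x) := by
  induction n with
  | zero => simp [dirKer]
  | succ n ih =>
    have : dirKer (n + 1) x = dirKer n x + 2 * Real.cos (2 * (n + 1) * x) := by
      simp only [dirKer, Finset.sum_range_succ]; ring
    rw [this, add_mul, ih]
    push_cast
    rw [show (2 * (n : ℝ) + 1) * x = 2 * (n + 1) * x - x by ring,
      show (2 * ((n : ℝ) + 1) + 1) * x = 2 * (n + 1) * x + x by ring, Real.sin_sub, Real.sin_add]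
    ring

lemma fejKer_mul_sin_sq (n : ℕ) (x : ℝ) :
    fejKer n x * Real.sin x ^ 2 = Real.sin (n * x) ^ 2 := by
  induction n with
  | zero => simp [fejKer]
  | succ n ih =>
    have : fejKer (n + 1) x = fejKer n x + dirKer n x := by
      simp only [fejKer, Finset.sum_range_succ]
    rw [this, add_mul, ih]
    have h := dirKer_mul_sin n x
    have e : dirKer n x * Real.sin x ^ 2 = Real.sin ((2 * n + 1) * x) * Real.sin x := by
      rw [← h]; ring
    rw [e]
    push_cast
    rw [show (2 * (n : ℝ) + 1) * x = n * x + (n * x + x) by ring,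
      show ((n : ℝ) + 1) * x = n * x + x by ring]
    have e2 : Real.sin x = Real.sin ((n * x + x) - n * x) := by congr 1; ring
    have s1 := Real.sin_sq_add_cos_sq (n * x + x)
    have s2 := Real.sin_sq_add_cos_sq (n * x)
    rw [Real.sin_add (n * x) (n * x + x), e2, Real.sin_sub]
    generalize Real.sin (n * x + x) = S at *
    generalize Real.cos (n * x + x) = C at *
    generalize Real.sin (n * x) = s at *
    generalize Real.cos (n * x) = c at *
    linear_combination (-s ^ 2) * s1 + S ^ 2 * s2

lemma continuous_fejKer (n : ℕ) : Continuous (fejKer n) := by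
  unfold fejKer dirKer
  fun_prop

lemma integral_fejKer (n : ℕ) :
    ∫ x in (0 : ℝ)..Real.pi / 2, fejKer n x = n * (Real.pi / 2) := by
  have hd : ∀ j : ℕ, ∫ x in (0 : ℝ)..Real.pi / 2, dirKer j x = Real.pi / 2 := fun j => by
    unfold dirKer
    rw [intervalIntegral.integral_add (by simp) (Continuous.intervalIntegrable (by fun_prop) _ _),
      intervalIntegral.integral_const_mul, intervalIntegral.integral_finsetSum
        (fun k _ => Continuous.intervalIntegrable (by fun_prop) _ _)]
    rw [Finset.sum_eq_zero]
    · simp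
    · intro k _
      have hk : (2 : ℝ) * (k + 1) ≠ 0 := by positivity
      rw [intervalIntegral.integral_comp_mul_left (fun x => Real.cos x) hk, integral_cos]
      rw [show 2 * ((k : ℝ) + 1) * (Real.pi / 2) = ((k + 1 : ℕ) : ℝ) * Real.pi by push_cast; ring,
        Real.sin_nat_mul_pi]
      simp
  unfold fejKer
  rw [intervalIntegral.integral_finsetSum]
  · simp [hd]
  · intro j _
    unfold dirKer
    exact Continuous.intervalIntegrable (by fun_prop) _ _

/-- Comparison of `sin²(nx) / x²` with the Fejér kernel, from
`x cos x ≤ sin x ≤ x`, that is, `1/sin² x - 1 ≤ 1/x² ≤ 1/sin² x`. -/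
lemma fejKer_bounds (n : ℕ) {x : ℝ} (hx : x ∈ Set.Ioo 0 (Real.pi / 2)) :
    fejKer n x - 1 ≤ n ^ 2 * Real.sinc (n * x) ^ 2 ∧
      n ^ 2 * Real.sinc (n * x) ^ 2 ≤ fejKer n x := by
  obtain ⟨h0, h1⟩ := hx
  have hs : 0 < Real.sin x := Real.sin_pos_of_pos_of_lt_pi h0 (by linarith [Real.pi_pos])
  have hc : 0 < Real.cos x := Real.cos_pos_of_mem_Ioo ⟨by linarith, h1⟩
  have hle : Real.sin x ≤ x := Real.sin_le h0.le
  have htan : x * Real.cos x ≤ Real.sin x := by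
    have := Real.lt_tan h0 h1
    rw [Real.tan_eq_sin_div_cos, lt_div_iff₀ hc] at this
    exact this.le
  have hsc : n ^ 2 * Real.sinc (n * x) ^ 2 = Real.sin (n * x) ^ 2 / x ^ 2 := by
    by_cases hn : n = 0
    · simp [hn]
    have : (n : ℝ) ≠ 0 := by exact_mod_cast hn
    rw [Real.sinc_of_ne_zero (by positivity)]
    field_simp
  have hF : fejKer n x = Real.sin (n * x) ^ 2 / Real.sin x ^ 2 := by
    rw [← fejKer_mul_sin_sq]; field_simp
  rw [hsc]
  constructor
  · have h2 : (x * Real.cos x) ^ 2 ≤ Real.sin x ^ 2 := by gcongr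
    have key : 1 / Real.sin x ^ 2 - 1 ≤ 1 / x ^ 2 := by
      have : 1 / Real.sin x ^ 2 - 1 = Real.cos x ^ 2 / Real.sin x ^ 2 := by
        rw [Real.cos_sq']; field_simp
      rw [this, div_le_div_iff₀ (by positivity) (by positivity)]
      linarith
    have hb := Real.sin_sq_le_one (n * x)
    have hb0 := sq_nonneg (Real.sin (n * x))
    have key0 : 0 ≤ 1 / x ^ 2 := by positivity
    have h3 := mul_le_mul_of_nonneg_left key hb0
    rw [hF, div_eq_mul_one_div, div_eq_mul_one_div (_ ^ 2) (x ^ 2)]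
    linarith
  · rw [hF]
    gcongr

/-- `∫_0^∞ (sin r / r)² dr = π / 2`. -/
lemma tendsto_integral_sinc_sq :
    Tendsto (fun R : ℝ => ∫ r in (0 : ℝ)..R, Real.sinc r ^ 2) atTop (𝓝 (Real.pi / 2)) := by
  have hcont : Continuous fun r : ℝ => Real.sinc r ^ 2 := Real.continuous_sinc.pow 2
  have mono : Monotone fun R : ℝ => ∫ r in (0 : ℝ)..R, Real.sinc r ^ 2 := by
    intro a b hab
    have := intervalIntegral.integral_add_adjacent_intervals
      (hcont.intervalIntegrable (μ := volume) 0 a) (hcont.intervalIntegrable a b)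
    have h2 : 0 ≤ ∫ r in a..b, Real.sinc r ^ 2 :=
      intervalIntegral.integral_nonneg hab fun _ _ => sq_nonneg _
    simp only
    linarith
  -- By monotonicity it suffices to let `R` run through the multiples of `π / 2`.
  have hφ : Tendsto (fun n : ℕ => (n : ℝ) * (Real.pi / 2)) atTop atTop :=
    tendsto_natCast_atTop_atTop.atTop_mul_const (by positivity)
  refine (tendsto_iff_tendsto_subseq_of_monotone mono hφ).2 ?_
  have hb : ∀ n : ℕ, 0 < n →
      Real.pi / 2 - (Real.pi / 2) / n ≤ ∫ r in (0 : ℝ)..n * (Real.pi / 2), Real.sinc r ^ 2 ∧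
      ∫ r in (0 : ℝ)..n * (Real.pi / 2), Real.sinc r ^ 2 ≤ Real.pi / 2 := by
    intro n hn
    have hn' : (0 : ℝ) < n := by exact_mod_cast hn
    have hpi := Real.pi_pos
    have e : ∫ x in (0 : ℝ)..Real.pi / 2, (n : ℝ) ^ 2 * Real.sinc (n * x) ^ 2 =
        n * ∫ r in (0 : ℝ)..n * (Real.pi / 2), Real.sinc r ^ 2 := by
      rw [intervalIntegral.integral_const_mul,
        intervalIntegral.integral_comp_mul_left (fun x => Real.sinc x ^ 2) hn'.ne']
      rw [mul_zero, smul_eq_mul]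
      field_simp
    have hF := continuous_fejKer n
    have hi : Continuous fun x : ℝ => (n : ℝ) ^ 2 * Real.sinc (n * x) ^ 2 := by
      have := hcont.comp (continuous_const.mul continuous_id : Continuous fun x : ℝ => (n : ℝ) * x)
      exact continuous_const.mul this
    have l1 := intervalIntegral.integral_mono_on_of_le_Ioo (a := 0) (b := Real.pi / 2)
      (μ := volume) (by positivity)
      (Continuous.intervalIntegrable (u := fun x => fejKer n x - 1) (by fun_prop) _ _) (hi.intervalIntegrable _ _)
      (fun x hx => (fejKer_bounds n hx).1)
    have l2 := intervalIntegral.integral_mono_on_of_le_Ioo (a := 0) (b := Real.pi / 2)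
      (μ := volume) (by positivity)
      (hi.intervalIntegrable _ _) (hF.intervalIntegrable _ _)
      (fun x hx => (fejKer_bounds n hx).2)
    rw [e, integral_fejKer] at l2
    rw [e, intervalIntegral.integral_sub (hF.intervalIntegrable _ _) (by simp),
      integral_fejKer] at l1
    simp only [intervalIntegral.integral_const, sub_zero, smul_eq_mul, mul_one] at l1
    refine ⟨?_, le_of_mul_le_mul_left l2 hn'⟩
    refine le_of_mul_le_mul_left (le_trans (le_of_eq ?_) l1) hn'
    field_simp
  have lim : Tendsto (fun n : ℕ => Real.pi / 2 - (Real.pi / 2) / n) atTop (𝓝 (Real.pi / 2)) := by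
    simpa using tendsto_const_nhds.sub (tendsto_const_div_atTop_nhds_zero_nat (Real.pi / 2))
  refine tendsto_of_tendsto_of_tendsto_of_le_of_le' lim tendsto_const_nhds ?_ ?_
  · filter_upwards [eventually_gt_atTop 0] with n hn using (hb n hn).1
  · filter_upwards [eventually_gt_atTop 0] with n hn using (hb n hn).2

/-! ### The radial integral -/

/-- The squared denominator of the prefactor of `J_{m/2}`, see `besselJ_sq`. -/
noncomputable def normConst (m : ℕ) : ℝ := 2 ^ m * Real.pi * Real.Gamma ((m : ℝ) / 2 + 1 / 2) ^ 2

lemma normConst_pos (m : ℕ) : 0 < normConst m := by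
  have : 0 < Real.Gamma ((m : ℝ) / 2 + 1 / 2) := Real.Gamma_pos_of_pos (by positivity)
  unfold normConst
  positivity

lemma normConst_add_two (m : ℕ) : normConst (m + 2) = (m + 1) ^ 2 * normConst m := by
  unfold normConst
  push_cast
  rw [show ((m : ℝ) + 2) / 2 + 1 / 2 = ((m : ℝ) / 2 + 1 / 2) + 1 by ring,
    Real.Gamma_add_one (by positivity)]
  ring

lemma besselJ_sq (m : ℕ) {r : ℝ} (hr : 0 < r) :
    besselJ ((m : ℝ) / 2) r ^ 2 = r ^ m * poissonInt m r ^ 2 / normConst m := by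
  have e : (∫ θ in (0 : ℝ)..Real.pi, Real.sin θ ^ (2 * ((m : ℝ) / 2)) *
      Real.cos (r * Real.cos θ)) = poissonInt m r := by
    unfold poissonInt
    refine intervalIntegral.integral_congr fun θ _ => ?_
    rw [mul_div_cancel₀ _ two_ne_zero, Real.rpow_natCast]
  have e2 : ((r / 2) ^ ((m : ℝ) / 2)) ^ 2 = r ^ m / 2 ^ m := by
    rw [← Real.rpow_natCast, ← Real.rpow_mul (by positivity), Nat.cast_ofNat,
      div_mul_cancel₀ _ two_ne_zero, Real.rpow_natCast, div_pow]
  rw [besselJ, e, mul_pow, div_pow, e2, mul_pow, Real.sq_sqrt Real.pi_pos.le, normConst]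
  rw [div_div, div_mul_eq_mul_div, mul_assoc]

/-- Divided by `normConst m`, this says `∫_0^∞ 2ν J_ν(r)² dr / r = 1` for `ν = m/2 > 0`. -/
lemma tendsto_integral_dens (m : ℕ) (hm : 1 ≤ m) :
    Tendsto (fun R => ∫ r in (0 : ℝ)..R, dens m r) atTop (𝓝 (normConst m)) := by
  have step : ∀ m : ℕ, ∀ L, Tendsto (fun R => ∫ r in (0 : ℝ)..R, dens m r) atTop (𝓝 L) →
      Tendsto (fun R => ∫ r in (0 : ℝ)..R, dens (m + 2) r) atTop
        (𝓝 ((m + 1) ^ 2 * (L + energy m 0))) := fun m L h => by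
    have h2 := ((h.sub (tendsto_energy m)).add_const (energy m 0)).const_mul (((m : ℝ) + 1) ^ 2)
    rw [sub_zero] at h2
    refine h2.congr fun R => ?_
    have := integral_dens m R
    have hm : ((m : ℝ) + 1) ^ 2 ≠ 0 := by positivity
    field_simp at this
    linarith
  induction m using Nat.twoStepInduction with
  | zero => omega
  | one =>
    have e : normConst 1 = 4 * (Real.pi / 2) := by
      simp only [normConst]
      norm_num
      ring
    rw [e]
    refine (tendsto_integral_sinc_sq.const_mul 4).congr fun R => ?_
    rw [← intervalIntegral.integral_const_mul]
    congr 1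
    ext r
    simp only [dens, poissonInt_one]
    norm_num
    ring
  | more m ih _ =>
    rw [normConst_add_two]
    rcases Nat.eq_zero_or_pos m with rfl | hpos
    -- For order `1` the boundary term `J_0(0)² = 1` replaces the (vanishing) order `0` integral.
    · have h := step 0 0 (by simp [dens])
      convert! h using 2
      have hg : Real.Gamma (1 / 2) = √Real.pi := Real.Gamma_one_half_eq
      have hp : poissonInt 0 0 = Real.pi := by simp [poissonInt]
      simp only [normConst, energy, hp]
      norm_num [hg]
      rw [Real.sq_sqrt Real.pi_pos.le]
      ring
    · have h := step m _ (ih hpos)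
      have : energy m 0 = 0 := by simp [energy, hpos.ne']
      rwa [this, add_zero] at h

lemma integral_Ioi_dens (m : ℕ) (hm : 1 ≤ m) :
    ∫ r in Set.Ioi (0 : ℝ), dens m r = normConst m := by
  have h := tendsto_integral_dens m hm
  have hc := continuous_dens m
  have hint : IntegrableOn (dens m) (Set.Ioi 0) := by
    refine integrableOn_Ioi_of_intervalIntegral_norm_tendsto (normConst m) 0
      (fun R : ℝ => hc.integrableOn_Ioc) tendsto_id (h.congr' ?_)
    filter_upwards [eventually_ge_atTop 0] with R hR
    refine intervalIntegral.integral_congr fun r hr => ?_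
    rw [Set.uIcc_of_le hR] at hr
    have : 0 ≤ dens m r := by
      have := hr.1
      unfold dens
      positivity
    exact (Real.norm_of_nonneg this).symm
  exact tendsto_nhds_unique (intervalIntegral_tendsto_integral_Ioi 0 hint tendsto_id) h

/-- For `d ≥ 1`, `∫_{ℝ^d} ‖x‖^{-d} J_{d/2}(‖x‖)² dx = ω_d = π^{d/2}/Γ(1 + d/2)`,
the volume of the unit ball in `ℝ^d`. -/
theorem stmt_2 (d : ℕ) (hd : 1 ≤ d) :
    ∫ x : EuclideanSpace ℝ (Fin d),
        ‖x‖ ^ (-(d : ℝ)) * besselJ ((d : ℝ) / 2) ‖x‖ ^ 2 =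
      Real.pi ^ ((d : ℝ) / 2) / Real.Gamma (1 + (d : ℝ) / 2) := by
  have : Nonempty (Fin d) := ⟨⟨0, hd⟩⟩
  have hd0 : (d : ℝ) ≠ 0 := by positivity
  have : Nontrivial (EuclideanSpace ℝ (Fin d)) :=
    Module.nontrivial_of_finrank_pos (R := ℝ) (by rw [finrank_euclideanSpace_fin]; omega)
  rw [integral_fun_norm_addHaar volume
    (fun r : ℝ => r ^ (-(d : ℝ)) * besselJ ((d : ℝ) / 2) r ^ 2), finrank_euclideanSpace_fin]
  have e : ∫ y in Set.Ioi (0 : ℝ), y ^ (d - 1) • (y ^ (-(d : ℝ)) *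
      besselJ ((d : ℝ) / 2) y ^ 2) = 1 / d := by
    have : ∫ y in Set.Ioi (0 : ℝ), y ^ (d - 1) • (y ^ (-(d : ℝ)) *
        besselJ ((d : ℝ) / 2) y ^ 2) =
        ∫ y in Set.Ioi (0 : ℝ), (1 / (d * normConst d)) * dens d y := by
      refine setIntegral_congr_fun measurableSet_Ioi fun y hy => ?_
      have hy : 0 < y := hy
      have hn := normConst_pos d
      simp only [smul_eq_mul]
      rw [besselJ_sq d hy, Real.rpow_neg hy.le, Real.rpow_natCast, dens]
      field_simp
    rw [this, integral_const_mul, integral_Ioi_dens d hd]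
    have hn := normConst_pos d
    field_simp
  rw [e, Measure.real, EuclideanSpace.volume_ball]
  have hg : 0 < Real.Gamma ((d : ℝ) / 2 + 1) := Real.Gamma_pos_of_pos (by positivity)
  simp only [Fintype.card_fin, ENNReal.ofReal_one, one_pow, one_mul]
  rw [ENNReal.toReal_ofReal (by positivity), nsmul_eq_mul, smul_eq_mul, add_comm (1 : ℝ),
    Real.sqrt_eq_rpow, ← Real.rpow_natCast, ← Real.rpow_mul Real.pi_pos.le]
  rw [show 1 / 2 * (d : ℝ) = d / 2 by ring]
  field_simp
end

section
/- Let d ≥ 1 and for R > 0 define ℓ_R(x) = ω_d^{-1} ‖x‖^{-d} J_{d/2}(R‖x‖)² for x ∈ ℝ^d ∖ {0}, where ω_d = π^{d/2}/Γ(1 + d/2). If Ψ : ℝ^d → ℝ is measurable, bounded on ℝ^d, and continuous at 0, then lim_{R→∞} ∫_{ℝ^d} ℓ_R(x) Ψ(x) dx = Ψ(0). (The family {ℓ_R : R > 0} is an approximation of the identity.) -/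
/-!
The Fourier transform `F` of the indicator function of the unit ball of `ℝ^d` is radial. Rotating
`ξ` onto the first axis and slicing the ball by hyperplanes, the substitution `s = cos θ` turns it
into Poisson's integral, so that `‖F ξ‖² = ‖ξ‖^{-d} J_{d/2}(2π‖ξ‖)²` for `ξ ≠ 0`
(`norm_fourier_ball`). By Plancherel's theorem (`plancherel`) the integral of `‖F‖²` is the volume
`ω_d` of the ball, so `G = ω_d⁻¹ ‖F‖²` is integrable with integral one. With `c = R / (2π)` one has
`ℓ_R(x) = c^d G(c x)`, and dominated convergence after the change of variables `y = c x` gives the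
limit (`tendsto_integral_dilation`).
-/

open MeasureTheory Filter Metric
open scoped Topology

/-! ### Plancherel's theorem on `L¹ ∩ L²` -/

section
open FourierTransform SchwartzMap

variable {E : Type*} [NormedAddCommGroup E] [InnerProductSpace ℝ E] [FiniteDimensional ℝ E]
  [MeasurableSpace E] [BorelSpace E]

/-- On `L¹ ∩ L²` the Fourier integral agrees with the `L²` Fourier transform: both represent the
same tempered distribution, as seen by testing against smooth compactly supported functions. -/
lemma fourier_ae_eq_Lp_fourier {f : E → ℂ} (h1 : Integrable f) (h2 : MemLp f 2) :
    (𝓕 f : E → ℂ) =ᵐ[volume] (𝓕 (h2.toLp f) : Lp (α := E) ℂ 2 volume) := by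
  have hcont : Continuous (𝓕 f : E → ℂ) :=
    VectorFourier.fourierIntegral_continuous Real.continuous_fourierChar
      (innerSL ℝ).continuous₂ h1
  apply ae_eq_of_integral_contDiff_smul_eq hcont.locallyIntegrable
    ((Lp.memLp _).locallyIntegrable (by norm_num))
  intro g hg hgs
  let G : 𝓢(E, ℂ) := HasCompactSupport.toSchwartzMap (f := fun x => (g x : ℂ))
    (hgs.comp_left Complex.ofReal_zero) (Complex.ofRealCLM.contDiff.comp hg)
  have hG : ∀ x, G x = (g x : ℂ) := fun x => rfl
  have e1 : ∫ x : E, g x • (𝓕 (h2.toLp f) : Lp (α := E) ℂ 2 volume) x =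
      Lp.toTemperedDistribution (𝓕 (h2.toLp f) : Lp (α := E) ℂ 2 volume) G := by
    rw [Lp.toTemperedDistribution_apply]
    simp [hG]
  rw [e1, ← Lp.fourier_toTemperedDistribution_eq, TemperedDistribution.fourier_apply,
    Lp.toTemperedDistribution_apply]
  have e2 := VectorFourier.integral_fourierIntegral_smul_eq_flip (L := innerₗ E)
    (μ := volume) (ν := volume) (f := f) (g := G)
    Real.continuous_fourierChar (innerSL ℝ).continuous₂ h1 G.integrable
  rw [flip_innerₗ] at e2
  calc ∫ x, g x • 𝓕 f x = ∫ x, 𝓕 f x • G x := by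
        congr 1; ext x; simp [hG, mul_comm]
    _ = ∫ x, f x • 𝓕 (G : E → ℂ) x := e2
    _ = _ := by
        apply integral_congr_ae
        filter_upwards [h2.coeFn_toLp] with x hx
        rw [hx, SchwartzMap.fourier_coe, smul_eq_mul, smul_eq_mul, mul_comm]

/-- Plancherel's theorem for the Fourier integral of a function in `L¹ ∩ L²`. -/
lemma plancherel {f : E → ℂ} (h1 : Integrable f) (h2 : MemLp f 2) :
    Integrable (fun x => ‖𝓕 f x‖ ^ 2) ∧ ∫ x, ‖𝓕 f x‖ ^ 2 = ∫ x, ‖f x‖ ^ 2 := by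
  have hae := fourier_ae_eq_Lp_fourier h1 h2
  have hm : MemLp (𝓕 f) 2 := (memLp_congr_ae hae).2 (Lp.memLp _)
  -- The squared `L²` norm as an integral, read off from the inner product of `L²`.
  have key : ∀ u : Lp (α := E) ℂ 2 volume, ∫ x, ‖u x‖ ^ 2 = ‖u‖ ^ 2 := fun u => by
    have := L2.inner_def (𝕜 := ℂ) u u
    rw [inner_self_eq_norm_sq_to_K] at this
    simp_rw [inner_self_eq_norm_sq_to_K] at this
    norm_cast at this
    exact this.symm
  refine ⟨hm.integrable_norm_pow (by norm_num), ?_⟩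
  calc ∫ x, ‖𝓕 f x‖ ^ 2 = ∫ x : E, ‖(𝓕 (h2.toLp f) : Lp (α := E) ℂ 2 volume) x‖ ^ 2 :=
        integral_congr_ae (hae.mono fun x hx => by simp only [hx])
    _ = ∫ x : E, ‖h2.toLp f x‖ ^ 2 := by rw [key, key, Lp.norm_fourier_eq]
    _ = _ := integral_congr_ae (h2.coeFn_toLp.mono fun x hx => by simp only [hx])

end

/-! ### The Fourier transform of the unit ball -/

section
open FourierTransform

/-- An isometric splitting of `ℝ^{n+1}` as `ℝ × ℝ^n` whose first axis points along `ξ`: any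
isometry will do after composing with the reflection that takes the image of `(‖ξ‖, 0)` to `ξ`. -/
lemma exists_isometry (n : ℕ) (ξ : EuclideanSpace ℝ (Fin (n + 1))) :
    ∃ φ : WithLp 2 (ℝ × EuclideanSpace ℝ (Fin n)) ≃ₗᵢ[ℝ] EuclideanSpace ℝ (Fin (n + 1)),
      φ (WithLp.toLp 2 (‖ξ‖, 0)) = ξ := by
  have hr : Module.finrank ℝ (WithLp 2 (ℝ × EuclideanSpace ℝ (Fin n))) = n + 1 := by
    rw [(WithLp.linearEquiv 2 ℝ (ℝ × EuclideanSpace ℝ (Fin n))).finrank_eq]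
    simp [add_comm]
  let φ := ((stdOrthonormalBasis ℝ (WithLp 2 (ℝ × EuclideanSpace ℝ (Fin n)))).reindex
    (finCongr hr)).repr
  refine ⟨φ.trans (Submodule.reflection (ℝ ∙ (φ (WithLp.toLp 2 (‖ξ‖, 0)) - ξ))ᗮ), ?_⟩
  rw [LinearIsometryEquiv.trans_apply]
  apply Submodule.reflection_sub
  rw [LinearIsometryEquiv.norm_map, WithLp.prod_norm_eq_of_L2]
  simp

/-- Volume of a ball in `ℝ^n`, including `n = 0`, where the ball of positive radius is a point of
mass one. Mathlib's `EuclideanSpace.volume_ball` needs `n ≠ 0`. -/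
lemma volume_real_slice (n : ℕ) {r : ℝ} (hr : 0 < r) :
    volume.real (ball (0 : EuclideanSpace ℝ (Fin n)) r) =
      r ^ n * (√Real.pi ^ n / Real.Gamma (n / 2 + 1)) := by
  rcases n.eq_zero_or_pos with rfl | hn
  · have : ball (0 : EuclideanSpace ℝ (Fin 0)) r = {0} := by
      ext x; simp [Subsingleton.elim x 0, hr]
    rw [this]
    simp [Measure.real, volume_euclideanSpace_eq_dirac]
  · have : Nonempty (Fin n) := ⟨⟨0, hn⟩⟩
    rw [Measure.real, EuclideanSpace.volume_ball]
    have : 0 < Real.Gamma (n / 2 + 1) := Real.Gamma_pos_of_pos (by positivity)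
    simp only [Fintype.card_fin, ENNReal.toReal_mul, ENNReal.toReal_pow]
    rw [ENNReal.toReal_ofReal hr.le, ENNReal.toReal_ofReal (by positivity)]

/-- Slicing the unit ball orthogonally to `ξ`: the slice at height `s` is a ball of radius
`√(1 - s²)` in `ℝ^n`, and the character is constant on it. -/
lemma fourier_ball_slice (n : ℕ) (ξ : EuclideanSpace ℝ (Fin (n + 1))) :
    𝓕 ((ball (0 : EuclideanSpace ℝ (Fin (n + 1))) 1).indicator (fun _ => (1 : ℂ))) ξ =
      ((√Real.pi ^ n / Real.Gamma (n / 2 + 1) : ℝ) : ℂ) *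
      ∫ s in (-1 : ℝ)..1, (√(1 - s ^ 2) ^ n : ℝ) *
        Complex.exp (((-2 * Real.pi * ‖ξ‖ * s : ℝ) : ℂ) * Complex.I) := by
  obtain ⟨φ, hφ⟩ := exists_isometry n ξ
  set c : ℝ := √Real.pi ^ n / Real.Gamma (n / 2 + 1) with hc
  rw [Real.fourier_eq']
  rw [← φ.measurePreserving.integral_comp' (f := φ.toMeasurableEquiv) ]
  rw [← (WithLp.volume_preserving_toLp ℝ (EuclideanSpace ℝ (Fin n))).integral_comp
    (MeasurableEquiv.toLp 2 _).measurableEmbedding]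
  have hS : MeasurableSet {p : ℝ × EuclideanSpace ℝ (Fin n) | p.1 ^ 2 + ‖p.2‖ ^ 2 < 1} :=
    (isOpen_lt (by fun_prop) (by fun_prop)).measurableSet
  have hint : ∀ p : ℝ × EuclideanSpace ℝ (Fin n),
      Complex.exp (((-2 * Real.pi * inner ℝ (φ.toMeasurableEquiv (WithLp.toLp 2 p)) ξ : ℝ) : ℂ) *
          Complex.I) •
        (ball (0 : EuclideanSpace ℝ (Fin (n + 1))) 1).indicator (fun _ => (1 : ℂ))
          (φ.toMeasurableEquiv (WithLp.toLp 2 p)) =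
      {p : ℝ × EuclideanSpace ℝ (Fin n) | p.1 ^ 2 + ‖p.2‖ ^ 2 < 1}.indicator
        (fun p => Complex.exp (((-2 * Real.pi * ‖ξ‖ * p.1 : ℝ) : ℂ) * Complex.I)) p := by
    intro p
    have e1 : inner ℝ (φ (WithLp.toLp 2 p)) ξ = ‖ξ‖ * p.1 := by
      conv_lhs => rw [← hφ]
      rw [LinearIsometryEquiv.inner_map_map]
      simp [WithLp.prod_inner_apply]
    have e2 : φ (WithLp.toLp 2 p) ∈ ball (0 : EuclideanSpace ℝ (Fin (n + 1))) 1 ↔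
        p.1 ^ 2 + ‖p.2‖ ^ 2 < 1 := by
      rw [mem_ball_zero_iff, LinearIsometryEquiv.norm_map, WithLp.prod_norm_eq_of_L2,
        Real.sqrt_lt' one_pos]
      simp
    simp only [Set.indicator, Set.mem_ofPred_eq, LinearIsometryEquiv.coe_toMeasurableEquiv, e1, e2]
    split_ifs <;> simp [mul_assoc]
  simp_rw [hint]
  have hfin : volume {p : ℝ × EuclideanSpace ℝ (Fin n) | p.1 ^ 2 + ‖p.2‖ ^ 2 < 1} < ⊤ := by
    refine (measure_mono (t := ball 0 1 ×ˢ ball 0 1) ?_).trans_lt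
      ((Measure.prod_prod (μ := volume) (ν := volume) _ _).trans_lt
        (ENNReal.mul_lt_top measure_ball_lt_top measure_ball_lt_top))
    intro p hp
    have hp : p.1 ^ 2 + ‖p.2‖ ^ 2 < 1 := hp
    constructor
    · rw [mem_ball_zero_iff, Real.norm_eq_abs, ← sq_lt_one_iff_abs_lt_one]
      nlinarith [sq_nonneg ‖p.2‖]
    · rw [mem_ball_zero_iff, ← abs_of_nonneg (norm_nonneg p.2), ← sq_lt_one_iff_abs_lt_one]
      nlinarith [sq_nonneg p.1]
  have hI : Integrable ({p : ℝ × EuclideanSpace ℝ (Fin n) | p.1 ^ 2 + ‖p.2‖ ^ 2 < 1}.indicator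
        (fun p => Complex.exp (((-2 * Real.pi * ‖ξ‖ * p.1 : ℝ) : ℂ) * Complex.I)))
        (volume.prod volume) := by
    rw [integrable_indicator_iff hS]
    refine Measure.integrableOn_of_bounded (M := 1) hfin.ne ?_ ?_
    · exact Continuous.aestronglyMeasurable (by fun_prop)
    · exact Eventually.of_forall fun p => by rw [Complex.norm_exp_ofReal_mul_I]
  rw [show (volume : Measure (ℝ × EuclideanSpace ℝ (Fin n))) = volume.prod volume from rfl,
    integral_prod _ hI]
  have hin : ∀ s : ℝ, ∫ y : EuclideanSpace ℝ (Fin n),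
      {p : ℝ × EuclideanSpace ℝ (Fin n) | p.1 ^ 2 + ‖p.2‖ ^ 2 < 1}.indicator
        (fun p => Complex.exp (((-2 * Real.pi * ‖ξ‖ * p.1 : ℝ) : ℂ) * Complex.I)) (s, y) =
      (Set.Ioo (-1 : ℝ) 1).indicator (fun s => (c : ℂ) * ((√(1 - s ^ 2) ^ n : ℝ) *
        Complex.exp (((-2 * Real.pi * ‖ξ‖ * s : ℝ) : ℂ) * Complex.I))) s := by
    intro s
    by_cases hs : s ∈ Set.Ioo (-1 : ℝ) 1
    · have hpos : 0 < 1 - s ^ 2 := by nlinarith [hs.1, hs.2]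
      have hr : 0 < √(1 - s ^ 2) := Real.sqrt_pos.2 hpos
      have : ∀ y : EuclideanSpace ℝ (Fin n),
          {p : ℝ × EuclideanSpace ℝ (Fin n) | p.1 ^ 2 + ‖p.2‖ ^ 2 < 1}.indicator
          (fun p => Complex.exp (((-2 * Real.pi * ‖ξ‖ * p.1 : ℝ) : ℂ) * Complex.I)) (s, y) =
          (ball (0 : EuclideanSpace ℝ (Fin n)) (√(1 - s ^ 2))).indicator (fun _ =>
            Complex.exp (((-2 * Real.pi * ‖ξ‖ * s : ℝ) : ℂ) * Complex.I)) y := by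
        intro y
        have : s ^ 2 + ‖y‖ ^ 2 < 1 ↔ ‖y‖ < √(1 - s ^ 2) := by
          rw [Real.lt_sqrt (norm_nonneg y)]
          constructor <;> intro h <;> linarith
        simp only [Set.indicator, Set.mem_ofPred_eq, mem_ball_zero_iff, this]
      simp_rw [this]
      rw [integral_indicator_const _ measurableSet_ball, volume_real_slice n hr,
        Set.indicator_of_mem hs, Complex.real_smul]
      push_cast [hc]
      ring
    · rw [Set.indicator_of_notMem hs]
      refine integral_eq_zero_of_ae (Eventually.of_forall fun y => ?_)
      refine Set.indicator_of_notMem (fun h => hs ?_) _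
      have h : s ^ 2 + ‖y‖ ^ 2 < 1 := h
      exact abs_lt.1 ((sq_lt_one_iff_abs_lt_one s).1 (by nlinarith [sq_nonneg ‖y‖]))
  simp_rw [hin]
  rw [integral_indicator measurableSet_Ioo, integral_const_mul,
    intervalIntegral.integral_of_le (by norm_num), integral_Ioc_eq_integral_Ioo]

/-- The substitution `s = cos θ`; the imaginary part vanishes because its integrand is odd in `s`. -/
lemma slice_integral_eq (n : ℕ) (a : ℝ) :
    ∫ s in (-1 : ℝ)..1, (√(1 - s ^ 2) ^ n : ℝ) * Complex.exp (((-a * s : ℝ) : ℂ) * Complex.I) =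
      ((∫ θ in (0 : ℝ)..Real.pi, Real.sin θ ^ (n + 1) * Real.cos (a * Real.cos θ) : ℝ) : ℂ) := by
  have h1 := intervalIntegral.integral_comp_mul_deriv (a := 0) (b := Real.pi)
    (f := Real.cos) (f' := fun θ => - Real.sin θ)
    (g := fun s => (√(1 - s ^ 2) ^ n : ℝ) * Real.cos (a * s))
    (fun x _ => Real.hasDerivAt_cos x) (by fun_prop) (by fun_prop)
  have h2 : ∫ s in (-1 : ℝ)..1, (√(1 - s ^ 2) ^ n : ℝ) * Real.sin (a * s) = 0 := by
    have := intervalIntegral.integral_comp_neg (a := -1) (b := 1)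
      (fun s : ℝ => (√(1 - s ^ 2) ^ n : ℝ) * Real.sin (a * s))
    simp at this
    linarith
  have h3 : ∫ θ in (0 : ℝ)..Real.pi, Real.sin θ ^ (n + 1) * Real.cos (a * Real.cos θ) =
      ∫ s in (-1 : ℝ)..1, (√(1 - s ^ 2) ^ n : ℝ) * Real.cos (a * s) := by
    rw [Real.cos_zero, Real.cos_pi, intervalIntegral.integral_symm (-1) 1] at h1
    rw [← neg_eq_iff_eq_neg.2 h1, ← intervalIntegral.integral_neg]
    refine intervalIntegral.integral_congr fun θ hθ => ?_
    rw [Set.uIcc_of_le Real.pi_pos.le] at hθ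
    have : √(1 - Real.cos θ ^ 2) = Real.sin θ := by
      rw [← Real.sin_sq, Real.sqrt_sq (Real.sin_nonneg_of_mem_Icc hθ)]
    simp only [Function.comp, this]
    ring
  rw [h3]
  have h4 : ∀ s : ℝ, ((√(1 - s ^ 2) ^ n : ℝ) : ℂ) * Complex.exp (((-a * s : ℝ) : ℂ) * Complex.I) =
      (((√(1 - s ^ 2) ^ n : ℝ) * Real.cos (a * s) : ℝ) : ℂ) -
      (((√(1 - s ^ 2) ^ n : ℝ) * Real.sin (a * s) : ℝ) : ℂ) * Complex.I := by
    intro s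
    rw [Complex.exp_mul_I, ← Complex.ofReal_cos, ← Complex.ofReal_sin, neg_mul, Real.cos_neg,
      Real.sin_neg]
    push_cast
    ring
  simp_rw [h4]
  rw [intervalIntegral.integral_sub, intervalIntegral.integral_mul_const,
    intervalIntegral.integral_ofReal, intervalIntegral.integral_ofReal, h2]
  · simp
  · exact Continuous.intervalIntegrable (by fun_prop) _ _
  · exact Continuous.intervalIntegrable (by fun_prop) _ _

/-- The point `ξ = 0` is excluded because `‖ξ‖ ^ (-d)` takes the junk value `0` there. -/
lemma norm_fourier_ball (n : ℕ) (ξ : EuclideanSpace ℝ (Fin (n + 1))) (hξ : ξ ≠ 0) :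
    ‖𝓕 ((ball (0 : EuclideanSpace ℝ (Fin (n + 1))) 1).indicator (fun _ => (1 : ℂ))) ξ‖ ^ 2 =
      ‖ξ‖ ^ (-((n + 1 : ℕ) : ℝ)) *
        besselJ (((n + 1 : ℕ) : ℝ) / 2) (2 * Real.pi * ‖ξ‖) ^ 2 := by
  have hr : 0 < ‖ξ‖ := norm_pos_iff.2 hξ
  have hpi := Real.pi_pos
  have e := slice_integral_eq n (2 * Real.pi * ‖ξ‖)
  simp only [← neg_mul] at e
  rw [fourier_ball_slice, e, besselJ, ← Complex.ofReal_mul, Complex.norm_real, Real.norm_eq_abs,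
    sq_abs]
  have e1 : ∀ θ : ℝ, Real.sin θ ^ (2 * (((n + 1 : ℕ) : ℝ) / 2)) = Real.sin θ ^ (n + 1) := by
    intro θ
    rw [mul_div_cancel₀ _ two_ne_zero, Real.rpow_natCast]
  simp_rw [e1]
  rw [mul_pow, mul_pow, ← mul_assoc]
  congr 1
  have e2 : (2 * Real.pi * ‖ξ‖ / 2) ^ (((n + 1 : ℕ) : ℝ) / 2) =
      √Real.pi ^ (n + 1) * ‖ξ‖ ^ (((n + 1 : ℕ) : ℝ) / 2) := by
    rw [show 2 * Real.pi * ‖ξ‖ / 2 = Real.pi * ‖ξ‖ by ring, Real.mul_rpow hpi.le hr.le,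
      Real.rpow_div_two_eq_sqrt _ hpi.le, Real.rpow_natCast]
  have e3 : (‖ξ‖ ^ (((n + 1 : ℕ) : ℝ) / 2)) ^ 2 = ‖ξ‖ ^ ((n + 1 : ℕ) : ℝ) := by
    rw [← Real.rpow_natCast, ← Real.rpow_mul hr.le]
    congr 1; push_cast; ring
  have e4 : ((n + 1 : ℕ) : ℝ) / 2 + 1 / 2 = n / 2 + 1 := by push_cast; ring
  have hG : Real.Gamma (n / 2 + 1) ≠ 0 := (Real.Gamma_pos_of_pos (by positivity)).ne'
  rw [e2, e4, div_pow, div_pow, mul_pow, e3, Real.rpow_neg hr.le]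
  have : ‖ξ‖ ^ ((n + 1 : ℕ) : ℝ) ≠ 0 := (Real.rpow_pos_of_pos hr _).ne'
  field_simp
  ring

end

/-! ### Approximation of the identity -/

/-- Dilations `c^{dim E} G(c x)` of an integrable `G` of integral one form an approximate identity
for bounded functions continuous at `0`; no decay beyond integrability is required of `G`. -/
lemma tendsto_integral_dilation {E : Type*} [NormedAddCommGroup E] [NormedSpace ℝ E]
    [FiniteDimensional ℝ E] [MeasurableSpace E] [BorelSpace E] (μ : Measure E)
    [μ.IsAddHaarMeasure] {G Ψ : E → ℝ} (hG : Integrable G μ) (hG1 : ∫ x, G x ∂μ = 1)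
    (hmeas : Measurable Ψ) (hbdd : ∃ M : ℝ, ∀ x, |Ψ x| ≤ M) (hcont : ContinuousAt Ψ 0) :
    Tendsto (fun c : ℝ => ∫ x, c ^ Module.finrank ℝ E * G (c • x) * Ψ x ∂μ) atTop (𝓝 (Ψ 0)) := by
  obtain ⟨M, hM⟩ := hbdd
  -- The integral after the change of variables `y = c x`.
  have h1 : Tendsto (fun c : ℝ => ∫ y, G y * Ψ (c⁻¹ • y) ∂μ) atTop (𝓝 (∫ y, G y * Ψ 0 ∂μ)) := by
    refine tendsto_integral_filter_of_dominated_convergence (fun y => ‖G y‖ * M) ?_ ?_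
      (hG.norm.mul_const M) ?_
    · exact Eventually.of_forall fun c =>
        hG.1.mul (hmeas.comp (measurable_const_smul _)).aestronglyMeasurable
    · refine Eventually.of_forall fun c => Eventually.of_forall fun y => ?_
      rw [norm_mul]
      exact mul_le_mul_of_nonneg_left (hM _) (norm_nonneg _)
    · refine Eventually.of_forall fun y => Tendsto.const_mul _ ?_
      refine hcont.tendsto.comp ?_
      simpa using (tendsto_inv_atTop_zero (𝕜 := ℝ)).smul_const y
  rw [integral_mul_const, hG1, one_mul] at h1
  refine h1.congr' ?_
  filter_upwards [eventually_gt_atTop 0] with c hc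
  have := Measure.integral_comp_smul_of_nonneg μ (fun y => G y * Ψ (c⁻¹ • y)) c (hR := hc.le)
  have hc' : c ^ Module.finrank ℝ E ≠ 0 := pow_ne_zero _ hc.ne'
  rw [eq_inv_smul_iff₀ hc', smul_eq_mul, ← integral_const_mul] at this
  rw [← this]
  refine integral_congr_ae (Eventually.of_forall fun x => ?_)
  simp only [smul_smul, inv_mul_cancel₀ hc.ne', one_smul, mul_assoc]
/-- The family `ℓ_R(x) = ω_d⁻¹ ‖x‖^{-d} J_{d/2}(R‖x‖)²`, `R > 0`, is an approximation
of the identity: for every measurable `Ψ : ℝ^d → ℝ` which is bounded and continuous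
at `0`, we have `∫ ℓ_R(x) Ψ(x) dx → Ψ(0)` as `R → ∞`. -/
theorem stmt_3 (d : ℕ) (hd : 1 ≤ d) (Ψ : EuclideanSpace ℝ (Fin d) → ℝ)
    (hmeas : Measurable Ψ) (hbdd : ∃ M : ℝ, ∀ x, |Ψ x| ≤ M)
    (hcont : ContinuousAt Ψ 0) :
    Tendsto
      (fun R : ℝ => ∫ x : EuclideanSpace ℝ (Fin d),
          (Real.pi ^ ((d : ℝ) / 2) / Real.Gamma (1 + (d : ℝ) / 2))⁻¹ *
            (‖x‖ ^ (-(d : ℝ)) * besselJ ((d : ℝ) / 2) (R * ‖x‖) ^ 2) * Ψ x)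
      atTop (𝓝 (Ψ 0)) := by
  obtain ⟨n, rfl⟩ : ∃ n, d = n + 1 := ⟨d - 1, by omega⟩
  set ω : ℝ := Real.pi ^ (((n + 1 : ℕ) : ℝ) / 2) / Real.Gamma (1 + ((n + 1 : ℕ) : ℝ) / 2) with hω
  have hω0 : 0 < ω :=
    div_pos (Real.rpow_pos_of_pos Real.pi_pos _) (Real.Gamma_pos_of_pos (by positivity))
  have hvol : volume.real (ball (0 : EuclideanSpace ℝ (Fin (n + 1))) 1) = ω := by
    rw [volume_real_slice _ one_pos, hω, Real.rpow_div_two_eq_sqrt _ Real.pi_pos.le,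
      Real.rpow_natCast, add_comm (1 : ℝ)]
    simp
  let f : EuclideanSpace ℝ (Fin (n + 1)) → ℂ := (ball 0 1).indicator (fun _ => (1 : ℂ))
  have hf1 : Integrable f :=
    (integrable_indicator_iff measurableSet_ball).2 (integrableOn_const measure_ball_lt_top.ne)
  have hf2 : MemLp f 2 :=
    memLp_indicator_const 2 measurableSet_ball 1 (Or.inr measure_ball_lt_top.ne)
  obtain ⟨hI, hP⟩ := plancherel hf1 hf2
  have hfω : ∫ x, ‖f x‖ ^ 2 = ω := by
    have : ∀ x, ‖f x‖ ^ 2 = (ball 0 1).indicator (fun _ => (1 : ℝ)) x := fun x => by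
      simp only [f, Set.indicator]
      split_ifs <;> simp
    simp_rw [this]
    rw [integral_indicator_const _ measurableSet_ball, hvol, smul_eq_mul, mul_one]
  have hlim := tendsto_integral_dilation volume (hI.const_mul ω⁻¹)
    (by rw [integral_const_mul, hP, hfω, inv_mul_cancel₀ hω0.ne']) hmeas hbdd hcont
  have hR : Tendsto (fun R : ℝ => R / (2 * Real.pi)) atTop atTop :=
    tendsto_id.atTop_div_const (by positivity)
  refine (hlim.comp hR).congr' ?_
  filter_upwards [eventually_gt_atTop 0] with R hR0
  refine integral_congr_ae ?_
  filter_upwards [Measure.ae_ne volume (0 : EuclideanSpace ℝ (Fin (n + 1)))] with x hx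
  set c : ℝ := R / (2 * Real.pi) with hc
  have hc0 : 0 < c := by positivity
  have hcR : 2 * Real.pi * (c * ‖x‖) = R * ‖x‖ := by
    rw [hc]; field_simp
  have hn := norm_fourier_ball n (c • x) (smul_ne_zero hc0.ne' hx)
  rw [norm_smul, Real.norm_of_nonneg hc0.le, hcR, Real.mul_rpow hc0.le (norm_nonneg x),
    Real.rpow_neg hc0.le, Real.rpow_natCast] at hn
  rw [finrank_euclideanSpace_fin, hn]
  have : c ^ (n + 1) ≠ 0 := by positivity
  field_simp
end

section
/- Let d ≥ 1, β ∈ (0, d), let p ≥ 1 be an integer, and let a₁, …, a_p ∈ ℝ^d be pairwise distinct points. Then ∫_{ℝ^d} ∏_{i=1}^p ‖a_i + z‖^{-β} dz < ∞ if and only if p·β > d. -/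
/-!
Convergence at infinity and convergence at the points `-a i` are separate questions. Near `-a i`
exactly one factor is singular, because the points are distinct, and `‖a i + z‖ ^ (-β)` is locally
integrable since `β < d`. Away from all of these points the product is comparable to
`(1 + ‖z‖) ^ (-(p * β))`, which is integrable exactly when `d < p * β`.

The upper bound is `prod_riesz_le_of_far` together with `prod_riesz_le_of_near`. Conversely, for
`R < ‖z‖` with `R` bounding all `‖a i‖`, the product is at least `(2 * ‖z‖) ^ (-(p * β))`
(`le_prod_riesz`), whose integrability over that region reduces in polar coordinates to that of
`y ^ (d - 1 - p * β)` over `Ioi R`.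
-/

open MeasureTheory Filter Metric
open scoped Topology ENNReal

section RieszProduct

variable {E : Type*} [NormedAddCommGroup E] {β : ℝ} {p : ℕ} {a : Fin p → E}

/-- Away from all the singularities, the product decays like `(1 + ‖z‖) ^ (-(p * β))`. -/
lemma prod_riesz_le_of_far (hβ : 0 < β) {R δ : ℝ} (hR : 0 < R) (hδ : 0 < δ)
    (haR : ∀ i, ‖a i‖ ≤ R) {z : E} (hz : ∀ i, δ ≤ ‖a i + z‖) :
    ∏ i, ‖a i + z‖ ^ (-β) ≤
      (((1 + R) / δ + 1)⁻¹ ^ (-β)) ^ p * (1 + ‖z‖) ^ (-(p * β)) := by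
  set K := (1 + R) / δ + 1 with hK
  have hKpos : 0 < K := by positivity
  have hfac : ∀ i, ‖a i + z‖ ^ (-β) ≤ K⁻¹ ^ (-β) * (1 + ‖z‖) ^ (-β) := by
    intro i
    rw [← Real.mul_rpow (by positivity) (by positivity)]
    apply Real.rpow_le_rpow_of_nonpos (by positivity) _ (by linarith)
    rw [inv_mul_le_iff₀ hKpos]
    have h1 : ‖z‖ ≤ ‖a i + z‖ + ‖a i‖ := by
      simpa using norm_sub_le (a i + z) (a i)
    have h2 : (1 + R) ≤ (1 + R) / δ * ‖a i + z‖ := by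
      rw [div_mul_eq_mul_div, le_div_iff₀ hδ]
      exact mul_le_mul_of_nonneg_left (hz i) (by linarith)
    have := haR i
    rw [hK, add_mul]
    linarith
  calc ∏ i, ‖a i + z‖ ^ (-β) ≤ ∏ _i : Fin p, K⁻¹ ^ (-β) * (1 + ‖z‖) ^ (-β) :=
        Finset.prod_le_prod (fun i _ => by positivity) (fun i _ => hfac i)
    _ = _ := by
        rw [Finset.prod_const, Finset.card_univ, Fintype.card_fin, mul_pow]
        congr 1
        rw [← Real.rpow_natCast, ← Real.rpow_mul (by positivity)]
        congr 1
        ring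

/-- Near the singularity `-a i`, all the other factors are bounded. -/
lemma prod_riesz_le_of_near (hβ : 0 < β) {δ : ℝ} (hδ : 0 < δ)
    (hsep : ∀ i j, i ≠ j → 2 * δ ≤ ‖a i - a j‖) {z : E} {i : Fin p} (hz : ‖a i + z‖ < δ) :
    ∏ j, ‖a j + z‖ ^ (-β) ≤ (δ ^ (-β)) ^ (p - 1) * ‖a i + z‖ ^ (-β) := by
  rw [← Finset.mul_prod_erase Finset.univ _ (Finset.mem_univ i), mul_comm]
  gcongr
  calc ∏ j ∈ Finset.univ.erase i, ‖a j + z‖ ^ (-β)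
      ≤ ∏ _j ∈ Finset.univ.erase i, δ ^ (-β) := by
        refine Finset.prod_le_prod (fun j _ => by positivity) (fun j hj => ?_)
        apply Real.rpow_le_rpow_of_nonpos hδ _ (by linarith)
        have h1 := hsep j i (Finset.ne_of_mem_erase hj)
        have h2 : ‖a j - a i‖ ≤ ‖a j + z‖ + ‖a i + z‖ := by
          simpa using norm_sub_le (a j + z) (a i + z)
        linarith
    _ = _ := by simp

lemma le_prod_riesz (hβ : 0 < β) {R : ℝ} (haR : ∀ i, ‖a i‖ ≤ R) {z : E} (hz : R < ‖z‖) :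
    (2 * ‖z‖) ^ (-(p * β)) ≤ ∏ i, ‖a i + z‖ ^ (-β) := by
  calc (2 * ‖z‖) ^ (-(p * β)) = ∏ _i : Fin p, (2 * ‖z‖) ^ (-β) := by
        rw [Finset.prod_const, Finset.card_univ, Fintype.card_fin, ← Real.rpow_natCast,
          ← Real.rpow_mul (by positivity)]
        congr 1
        ring
    _ ≤ _ := by
        refine Finset.prod_le_prod (fun i _ => by positivity) (fun i _ => ?_)
        have hi := haR i
        -- positivity of the base matters: `0 ^ (-β) = 0` in Lean
        have hpos : 0 < ‖a i + z‖ := by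
          have : ‖z‖ ≤ ‖a i + z‖ + ‖a i‖ := by simpa using norm_sub_le (a i + z) (a i)
          linarith
        apply Real.rpow_le_rpow_of_nonpos hpos _ (by linarith)
        linarith [norm_add_le (a i) z]

/-- A uniform separation constant for finitely many distinct points. -/
lemma exists_separation (ha : Function.Injective a) :
    ∃ δ : ℝ, 0 < δ ∧ ∀ i j, i ≠ j → 2 * δ ≤ ‖a i - a j‖ := by
  have h : ∀ᶠ δ : ℝ in 𝓝[>] 0, ∀ i j, i ≠ j → 2 * δ ≤ ‖a i - a j‖ := by
    simp only [eventually_all]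
    intro i j hij
    have hpos : 0 < ‖a i - a j‖ := norm_pos_iff.2 (sub_ne_zero.2 (ha.ne hij))
    filter_upwards [Ioo_mem_nhdsGT (half_pos hpos)] with δ hδ
    linarith [hδ.2]
  obtain ⟨δ, hδ, hδ0⟩ := (h.and self_mem_nhdsWithin).exists
  exact ⟨δ, hδ0, hδ⟩

lemma exists_norm_bound (a : Fin p → E) : ∃ R : ℝ, 0 < R ∧ ∀ i, ‖a i‖ ≤ R :=
  ⟨1 + ∑ i, ‖a i‖, by positivity, fun i => by
    have := Finset.single_le_sum (f := fun i => ‖a i‖) (fun i _ => norm_nonneg _)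
      (Finset.mem_univ i)
    linarith⟩

variable [NormedSpace ℝ E] [FiniteDimensional ℝ E] [Nontrivial E] [MeasurableSpace E]
  [BorelSpace E] (μ : Measure E) [μ.IsAddHaarMeasure]

lemma integrable_prod_riesz (hβ : 0 < β) (hβd : β < Module.finrank ℝ E)
    (ha : Function.Injective a) (h : (Module.finrank ℝ E : ℝ) < p * β) :
    Integrable (fun z => ∏ i, ‖a i + z‖ ^ (-β)) μ := by
  obtain ⟨δ, hδ, hsep⟩ := exists_separation ha
  obtain ⟨R, hR, haR⟩ := exists_norm_bound a
  set C := (((1 + R) / δ + 1)⁻¹ ^ (-β)) ^ p with hC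
  set C' := (δ ^ (-β)) ^ (p - 1) with hC'
  -- the local bump carrying the singularity, before translation to `-a i`
  set g : E → ℝ := (ball (0 : E) δ).indicator (fun z => ‖z‖ ^ (-β)) with hg
  have hgint : Integrable g μ := by
    rw [hg, integrable_indicator_iff measurableSet_ball]
    refine integrableOn_ball_of_norm_le_rpow (C := 1) (Module.finrank_pos) hβd ?_ ?_
    · filter_upwards with x
      rw [one_mul, Real.norm_of_nonneg (by positivity)]
    · exact (by fun_prop : Measurable fun z : E => ‖z‖ ^ (-β)).aestronglyMeasurable
  have hg0 : ∀ z, 0 ≤ g z := fun z => Set.indicator_nonneg (fun _ _ => by positivity) z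
  have hint : Integrable (fun z => C * (1 + ‖z‖) ^ (-(p * β)) + ∑ i, C' * g (a i + z)) μ :=
    ((integrable_one_add_norm h).const_mul C).add
      (integrable_finsetSum _ fun i _ => (hgint.comp_add_left (a i)).const_mul C')
  refine hint.mono' (by fun_prop : Measurable _).aestronglyMeasurable ?_
  filter_upwards with z
  rw [Real.norm_of_nonneg (Finset.prod_nonneg fun i _ => by positivity)]
  have hC0 : 0 ≤ C := by positivity
  have hC0' : 0 ≤ C' := by positivity
  by_cases hz : ∀ i, δ ≤ ‖a i + z‖
  · have h1 := prod_riesz_le_of_far hβ hR hδ haR hz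
    have h2 : 0 ≤ ∑ i, C' * g (a i + z) :=
      Finset.sum_nonneg fun i _ => mul_nonneg hC0' (hg0 _)
    linarith
  · push Not at hz
    obtain ⟨i, hi⟩ := hz
    have h1 := prod_riesz_le_of_near hβ hδ hsep hi
    have h2 : C' * g (a i + z) ≤ ∑ i, C' * g (a i + z) :=
      Finset.single_le_sum (f := fun i => C' * g (a i + z))
        (fun i _ => mul_nonneg hC0' (hg0 _)) (Finset.mem_univ i)
    have h3 : g (a i + z) = ‖a i + z‖ ^ (-β) :=
      Set.indicator_of_mem (by simpa using hi) _
    have h4 : 0 ≤ C * (1 + ‖z‖) ^ (-(p * β)) := by positivity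
    rw [h3] at h2
    linarith

lemma finrank_lt_of_integrable_prod_riesz (hβ : 0 < β)
    (h : Integrable (fun z => ∏ i, ‖a i + z‖ ^ (-β)) μ) :
    (Module.finrank ℝ E : ℝ) < p * β := by
  obtain ⟨R, hR, haR⟩ := exists_norm_bound a
  set f : ℝ → ℝ := (Set.Ioi R).indicator (fun y => (2 * y) ^ (-(p * β))) with hf
  have hfm : Measurable f := Measurable.indicator (by fun_prop) measurableSet_Ioi
  have hfint : Integrable (fun z : E => f ‖z‖) μ := by
    refine h.mono' (hfm.comp measurable_norm).aestronglyMeasurable ?_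
    filter_upwards with z
    by_cases hz : R < ‖z‖
    · rw [hf, Set.indicator_of_mem (Set.mem_Ioi.2 hz), Real.norm_of_nonneg (by positivity)]
      exact le_prod_riesz hβ haR hz
    · rw [hf, Set.indicator_of_notMem (by simpa using hz), norm_zero]
      exact Finset.prod_nonneg fun i _ => by positivity
  have h1 := ((integrable_fun_norm_addHaar μ).1 hfint).mono_set (Set.Ioi_subset_Ioi hR.le)
  have h2 : IntegrableOn (fun y : ℝ => y ^ ((Module.finrank ℝ E : ℝ) - 1 - p * β))
      (Set.Ioi R) := by
    refine IntegrableOn.congr_fun (h1.const_mul (2 ^ (p * β))) ?_ measurableSet_Ioi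
    intro y hy
    have hy0 : 0 < y := hR.trans hy
    simp only [hf, Set.indicator_of_mem hy, smul_eq_mul]
    rw [Real.mul_rpow (by norm_num) hy0.le, ← Real.rpow_natCast,
      Nat.cast_sub Module.finrank_pos, Real.rpow_neg (by norm_num : (0 : ℝ) ≤ 2),
      Real.rpow_sub hy0 _ (p * β), Real.rpow_neg hy0.le, Nat.cast_one]
    have : (2 : ℝ) ^ (p * β) ≠ 0 := by positivity
    field_simp
  rw [integrableOn_Ioi_rpow_iff hR] at h2
  linarith

end RieszProduct

/-- For `β ∈ (0,d)` and pairwise distinct `a₁,…,a_p ∈ ℝ^d`, the integral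
`∫_{ℝ^d} ∏_{i=1}^p ‖a_i + z‖^{-β} dz` is finite if and only if `pβ > d`. -/
theorem stmt_8 (d : ℕ) (hd : 1 ≤ d) (β : ℝ) (hβ0 : 0 < β) (hβd : β < d)
    (p : ℕ) (hp : 1 ≤ p) (a : Fin p → EuclideanSpace ℝ (Fin d))
    (ha : Function.Injective a) :
    (∫⁻ z : EuclideanSpace ℝ (Fin d),
        ENNReal.ofReal (∏ i, ‖a i + z‖ ^ (-β))) < ⊤ ↔ (d : ℝ) < p * β := by
  have hdim : Module.finrank ℝ (EuclideanSpace ℝ (Fin d)) = d := by simp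
  have : Nontrivial (EuclideanSpace ℝ (Fin d)) :=
    Module.nontrivial_of_finrank_pos (R := ℝ) (by omega)
  constructor
  · intro h
    have hint : Integrable (fun z => ∏ i, ‖a i + z‖ ^ (-β))
        (volume : Measure (EuclideanSpace ℝ (Fin d))) := by
      refine ⟨(by fun_prop : Measurable _).aestronglyMeasurable, ?_⟩
      rwa [hasFiniteIntegral_iff_ofReal
        (.of_forall fun z => Finset.prod_nonneg fun i _ => by positivity)]
    simpa [hdim] using finrank_lt_of_integrable_prod_riesz volume hβ0 hint
  · intro h
    exact (integrable_prod_riesz volume hβ0 (by rwa [hdim]) ha (by rwa [hdim])).lintegral_lt_top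
end

section
/- Let d ≥ 1, let p ≥ 2 be an integer and let r ∈ {1, …, p-1}. Suppose γ ∈ L^p(ℝ^d) and f ∈ L¹(ℝ^{pd}). For x ∈ ℝ^d write f^x(y₁,…,y_p) = f(y₁ - x, …, y_p - x). For R > 0 define I_r(R) = ∫_{B_R^4} dx₁ dx₂ dx₃ dx₄ ∫_{(ℝ^d)^{4p}} |f^{x₁}(s₁,…,s_{p-r}, a₁,…,a_r)| · |f^{x₂}(t₁,…,t_{p-r}, b₁,…,b_r)| · |f^{x₃}(s̃₁,…,s̃_{p-r}, ã₁,…,ã_r)| · |f^{x₄}(t̃₁,…,t̃_{p-r}, b̃₁,…,b̃_r)| · (∏_{i=1}^r |γ(a_i - b_i)| |γ(ã_i - b̃_i)|) · (∏_{j=1}^{p-r} |γ(t_j - t̃_j)| |γ(s̃_j - s_j)|) d𝐚 d𝐛 d𝐚̃ d𝐛̃ d𝐬 d𝐭 d𝐬̃ d𝐭̃. Then lim_{R→∞} R^{-2d} I_r(R) = 0. -/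
/-!
Write `G = |γ|`, `N = ∫ G ^ p` and let `g ≥ |f|` be a measurable majorant with finite integral.
Grouping the `4p` variables into four points of `(ℝ^d)^p` and translating each of them by the
corresponding `x_i` moves the dependence on `x` from `f` to the factors `γ`, and Tonelli turns
`R^{-2d} I_r(R)` into an integral, against the finite measure with density `g ⊗ g ⊗ g ⊗ g`, of
`R^{-2d}` times the integral over `B_R⁴` of a cyclic product
`u(x₁ - x₂) v(x₂ - x₄) w(x₃ - x₄) z(x₃ - x₁)`. Here `u`, `w` are products of `r` translates of
`G`, and `v`, `z` are products of `m = p - r` translates.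

For fixed `x₁, x₄` the integrals over `x₂` and `x₃` separate. Hölder's inequality for `p` factors
in `L^p` bounds each of them by `N`. The one over `x₂` is a convolution `φ(x₁ - x₄)` of functions
in the conjugate spaces `L^{p/r}` and `L^{p/m}`, so it also tends to `0` at infinity
(`tendsto_loopConv`; this is where `1 ≤ r` and `1 ≤ m` are needed). The average of `φ(x₁ - x₄)`
over `B_R²` therefore tends to `0` (`tendsto_average`), and dominated convergence with the
constant bound `c² N²`, `c` the volume of the unit ball, concludes (`tendsto_weighted`).
-/

open MeasureTheory Filter Metric
open scoped Topology ENNReal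

-- Instance search on four-fold products of `Fin n → E` exceeds the default size.
set_option synthInstance.maxSize 2000

/-! ### Regrouping iterated integrals -/

theorem lintegral_four {α : Type*} [MeasurableSpace α] (μ : Measure α) [SFinite μ]
    (F : α × α × α × α → ℝ≥0∞) (hF : Measurable F) :
    ∫⁻ x₁, ∫⁻ x₂, ∫⁻ x₃, ∫⁻ x₄, F (x₁, x₂, x₃, x₄) ∂μ ∂μ ∂μ ∂μ
      = ∫⁻ x, F x ∂(μ.prod (μ.prod (μ.prod μ))) := by
  rw [lintegral_prod _ (by fun_prop)]
  refine lintegral_congr fun x₁ => ?_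
  rw [lintegral_prod _ (by fun_prop)]
  refine lintegral_congr fun x₂ => ?_
  rw [lintegral_prod _ (by fun_prop)]

/-- Tonelli's theorem, bringing each integration over `A` next to the matching one over `M`. -/
theorem lintegral_regroup {M A : Type*} [MeasurableSpace M] [MeasurableSpace A]
    (μ : Measure M) (ν : Measure A) [SFinite μ] [SFinite ν]
    (F : M × M × M × M × A × A × A × A → ℝ≥0∞) (hF : Measurable F) :
    ∫⁻ s, ∫⁻ t, ∫⁻ s', ∫⁻ t', ∫⁻ a, ∫⁻ b, ∫⁻ a', ∫⁻ b', F (s, t, s', t', a, b, a', b')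
        ∂ν ∂ν ∂ν ∂ν ∂μ ∂μ ∂μ ∂μ
      = ∫⁻ s, ∫⁻ a, ∫⁻ t, ∫⁻ b, ∫⁻ s', ∫⁻ a', ∫⁻ t', ∫⁻ b', F (s, t, s', t', a, b, a', b')
        ∂ν ∂μ ∂ν ∂μ ∂ν ∂μ ∂ν ∂μ := by
  refine lintegral_congr fun s => ?_
  calc _ = ∫⁻ t, ∫⁻ s', ∫⁻ a, ∫⁻ t', ∫⁻ b, ∫⁻ a', ∫⁻ b', F (s, t, s', t', a, b, a', b')
        ∂ν ∂ν ∂ν ∂μ ∂ν ∂μ ∂μ := by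
        refine lintegral_congr fun t => lintegral_congr fun s' => ?_
        exact lintegral_lintegral_swap (by fun_prop)
    _ = ∫⁻ t, ∫⁻ a, ∫⁻ s', ∫⁻ t', ∫⁻ b, ∫⁻ a', ∫⁻ b', F (s, t, s', t', a, b, a', b')
        ∂ν ∂ν ∂ν ∂μ ∂μ ∂ν ∂μ := by
        refine lintegral_congr fun t => ?_
        exact lintegral_lintegral_swap (by fun_prop)
    _ = ∫⁻ a, ∫⁻ t, ∫⁻ s', ∫⁻ t', ∫⁻ b, ∫⁻ a', ∫⁻ b', F (s, t, s', t', a, b, a', b')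
        ∂ν ∂ν ∂ν ∂μ ∂μ ∂μ ∂ν :=
        lintegral_lintegral_swap (by fun_prop)
    _ = _ := by
        refine lintegral_congr fun a => lintegral_congr fun t => ?_
        calc _ = ∫⁻ s', ∫⁻ b, ∫⁻ t', ∫⁻ a', ∫⁻ b', F (s, t, s', t', a, b, a', b')
              ∂ν ∂ν ∂μ ∂ν ∂μ := by
              refine lintegral_congr fun s' => ?_
              exact lintegral_lintegral_swap (by fun_prop)
          _ = ∫⁻ b, ∫⁻ s', ∫⁻ t', ∫⁻ a', ∫⁻ b', F (s, t, s', t', a, b, a', b')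
              ∂ν ∂ν ∂μ ∂μ ∂ν := lintegral_lintegral_swap (by fun_prop)
          _ = _ := by
              refine lintegral_congr fun b => lintegral_congr fun s' => ?_
              exact lintegral_lintegral_swap (by fun_prop)

/-- Concatenation `(ℝ^d)^m × (ℝ^d)^r → (ℝ^d)^(m+r)` preserves the volume. -/
theorem lintegral_append {E : Type*} [MeasureSpace E] [SigmaFinite (volume : Measure E)]
    {m r : ℕ} (F : (Fin (m + r) → E) → ℝ≥0∞) (hF : Measurable F) :
    ∫⁻ s : Fin m → E, ∫⁻ a : Fin r → E, F (Fin.append s a) = ∫⁻ y, F y := by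
  have h1 := volume_measurePreserving_piCongrLeft (fun _ : Fin (m + r) => E) finSumFinEquiv
  have h2 := volume_measurePreserving_sumPiEquivProdPi_symm (fun _ : Fin m ⊕ Fin r => E)
  have h := h1.comp h2
  rw [← h.lintegral_comp hF, Measure.volume_eq_prod, lintegral_prod _ (by fun_prop)]
  refine lintegral_congr fun s => lintegral_congr fun a => congrArg F ?_
  funext i
  refine Fin.addCases (fun j => ?_) (fun j => ?_) i
  · have := MeasurableEquiv.piCongrLeft_apply_apply (β := fun _ : Fin (m + r) => E) finSumFinEquiv
      ((MeasurableEquiv.sumPiEquivProdPi fun _ : Fin m ⊕ Fin r => E).symm (s, a)) (Sum.inl j)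
    rw [Fin.append_left]; exact this.symm
  · have := MeasurableEquiv.piCongrLeft_apply_apply (β := fun _ : Fin (m + r) => E) finSumFinEquiv
      ((MeasurableEquiv.sumPiEquivProdPi fun _ : Fin m ⊕ Fin r => E).symm (s, a)) (Sum.inr j)
    rw [Fin.append_right]; exact this.symm

/-! ### Hölder's inequality for `p` factors in `L^p` -/

/-- Hölder's inequality for `p` factors with all exponents equal to `p`, split into two families.
The separate bounds `S` and `T` allow one of the families to be small. -/
theorem holder_prod {Ω ι κ : Type*} [MeasurableSpace Ω] (μ : Measure Ω) [Fintype ι] [Fintype κ]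
    {p : ℕ} (hp : p ≠ 0) (hcard : Fintype.card ι + Fintype.card κ = p)
    (u : ι → Ω → ℝ≥0∞) (v : κ → Ω → ℝ≥0∞) (hu : ∀ i, Measurable (u i))
    (hv : ∀ j, Measurable (v j)) {S T : ℝ≥0∞} (hS : ∀ i, ∫⁻ y, u i y ^ p ∂μ ≤ S)
    (hT : ∀ j, ∫⁻ y, v j y ^ p ∂μ ≤ T) :
    ∫⁻ y, (∏ i, u i y) * ∏ j, v j y ∂μ
      ≤ (S ^ (1 / p : ℝ)) ^ Fintype.card ι * (T ^ (1 / p : ℝ)) ^ Fintype.card κ := by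
  have hp' : (p : ℝ) ≠ 0 := by exact_mod_cast hp
  have hroot : ∀ x : ℝ≥0∞, (x ^ p) ^ (1 / p : ℝ) = x := fun x => by
    rw [← ENNReal.rpow_natCast, ← ENNReal.rpow_mul, mul_one_div_cancel hp', ENNReal.rpow_one]
  have h := ENNReal.lintegral_prod_norm_pow_le (μ := μ) (Finset.univ : Finset (ι ⊕ κ))
    (f := fun k y => (Sum.elim u v k y) ^ p) (p := fun _ => (1 / p : ℝ))
    (by
      rintro (i | j) -
      · exact ((hu i).pow_const p).aemeasurable
      · exact ((hv j).pow_const p).aemeasurable)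
    (by
      simp only [Finset.sum_const, Finset.card_univ, Fintype.card_sum, hcard, nsmul_eq_mul]
      exact mul_one_div_cancel hp')
    (fun _ _ => by positivity)
  simp only [hroot, Fintype.prod_sum_type, Sum.elim_inl, Sum.elim_inr] at h
  refine h.trans ?_
  rw [← Finset.card_univ, ← Finset.card_univ, ← Finset.prod_const, ← Finset.prod_const]
  gcongr with i _ j _
  · exact hS i
  · exact hT j

theorem holder_prod_self {Ω ι κ : Type*} [MeasurableSpace Ω] (μ : Measure Ω) [Fintype ι]
    [Fintype κ] {p : ℕ} (hp : p ≠ 0) (hcard : Fintype.card ι + Fintype.card κ = p)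
    (u : ι → Ω → ℝ≥0∞) (v : κ → Ω → ℝ≥0∞) (hu : ∀ i, Measurable (u i))
    (hv : ∀ j, Measurable (v j)) {N : ℝ≥0∞} (hS : ∀ i, ∫⁻ y, u i y ^ p ∂μ ≤ N)
    (hT : ∀ j, ∫⁻ y, v j y ^ p ∂μ ≤ N) :
    ∫⁻ y, (∏ i, u i y) * ∏ j, v j y ∂μ ≤ N := by
  refine (holder_prod μ hp hcard u v hu hv hS hT).trans_eq ?_
  have hp' : (p : ℝ) ≠ 0 := by exact_mod_cast hp
  rw [← pow_add, hcard, ← ENNReal.rpow_natCast, ← ENNReal.rpow_mul, one_div_mul_cancel hp',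
    ENNReal.rpow_one]

/-! ### The convolution along one pair of edges of the cycle -/

section
variable {E : Type*} [NormedAddCommGroup E] [InnerProductSpace ℝ E] [FiniteDimensional ℝ E]
  [MeasurableSpace E] [BorelSpace E]

theorem tendsto_tail (g : E → ℝ≥0∞) (hg : Measurable g) (hfin : ∫⁻ y, g y ≠ ∞) :
    Tendsto (fun L : ℝ => ∫⁻ y in {y : E | L ≤ ‖y‖}, g y) atTop (𝓝 0) := by
  have hms : ∀ L : ℝ, MeasurableSet {y : E | L ≤ ‖y‖} := fun L =>
    measurableSet_le measurable_const measurable_norm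
  simp_rw [← lintegral_indicator (hms _)]
  rw [← lintegral_zero (μ := (volume : Measure E))]
  refine tendsto_lintegral_filter_of_dominated_convergence g
    (Eventually.of_forall fun L => hg.indicator (hms L))
    (Eventually.of_forall fun L => ae_of_all _ fun y => Set.indicator_le_self _ _ _) hfin
    (ae_of_all _ fun y => ?_)
  refine tendsto_const_nhds.congr' ?_
  filter_upwards [eventually_gt_atTop ‖y‖] with L hL
  rw [Set.indicator_of_notMem]
  simpa using hL

/-- The convolution at `w` of the product of the `r` translates `G (α i + ·)` with the product of
the `m` translates `G (β j + ·)`. -/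
noncomputable def loopConv {r m : ℕ} (G : E → ℝ≥0∞) (α : Fin r → E) (β : Fin m → E) (w : E) :
    ℝ≥0∞ :=
  ∫⁻ y, (∏ i, G (α i + (w - y))) * ∏ j, G (β j + y)

theorem measurable_loopConv {r m : ℕ} {G : E → ℝ≥0∞} (hG : Measurable G) (α : Fin r → E)
    (β : Fin m → E) : Measurable (loopConv G α β) := by
  unfold loopConv
  fun_prop

theorem loopConv_le {r m p : ℕ} (hp : p ≠ 0) (hrm : m + r = p) {G : E → ℝ≥0∞} (hG : Measurable G)
    (α : Fin r → E) (β : Fin m → E) (w : E) : loopConv G α β w ≤ ∫⁻ y, G y ^ p := by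
  refine holder_prod_self volume hp (by simp; omega) (fun i y => G (α i + (w - y)))
    (fun j y => G (β j + y)) (fun i => by fun_prop) (fun j => by fun_prop) (fun i => ?_)
    (fun j => ?_)
  · simp_rw [← add_sub_assoc]
    exact (lintegral_sub_left_eq_self (fun y => G y ^ p) _).le
  · exact (lintegral_add_left_eq_self (fun y => G y ^ p) _).le

/-- The convolution vanishes at infinity: if `‖y‖ ≥ ‖w‖ / 2` fails then `‖w - y‖ ≥ ‖w‖ / 2`, so on
each part of the domain one of the two families in Hölder's inequality only sees a tail of
`G ^ p`. -/
theorem tendsto_loopConv {r m p : ℕ} (hr : 1 ≤ r) (hm : 1 ≤ m) (hrm : m + r = p)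
    {G : E → ℝ≥0∞} (hG : Measurable G) (hN : ∫⁻ y, G y ^ p ≠ ∞) (α : Fin r → E) (β : Fin m → E) :
    Tendsto (loopConv G α β) (Bornology.cobounded E) (𝓝 0) := by
  have hp : p ≠ 0 := by omega
  have hp' : (0 : ℝ) < 1 / p := by positivity
  set N := ∫⁻ y, G y ^ p with hNdef
  -- Summing over the translates gives one quantity dominating the tail of each of them.
  let tail : ∀ {k : ℕ}, (Fin k → E) → ℝ → ℝ≥0∞ :=
    fun c L => ∑ i, ∫⁻ y in {y : E | L ≤ ‖y‖}, G (c i + y) ^ p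
  have htail : ∀ {k : ℕ} (c : Fin k → E),
      Tendsto (fun w : E => tail c (‖w‖ / 2)) (Bornology.cobounded E) (𝓝 0) := by
    intro k c
    have h1 : Tendsto (fun L => tail c L) atTop (𝓝 0) := by
      have := tendsto_finsetSum (Finset.univ : Finset (Fin k))
        (f := fun i L => ∫⁻ y in {y : E | L ≤ ‖y‖}, G (c i + y) ^ p) (a := fun _ => 0)
        (x := atTop) fun i _ => tendsto_tail (fun y => G (c i + y) ^ p) (by fun_prop) (by
          rwa [lintegral_add_left_eq_self (fun y => G y ^ p)])
      simpa using this
    exact h1.comp (tendsto_norm_cobounded_atTop.atTop_div_const two_pos)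
  have hroot : ∀ {k n : ℕ} (c : Fin k → E), n ≠ 0 →
      Tendsto (fun w : E => (tail c (‖w‖ / 2) ^ (1 / p : ℝ)) ^ n) (Bornology.cobounded E) (𝓝 0) := by
    intro k n c hn
    have h1 := ((ENNReal.continuous_rpow_const (y := (1 / p : ℝ))).tendsto 0).comp (htail c)
    have h2 := (ENNReal.continuous_pow n).tendsto _ |>.comp h1
    rwa [ENNReal.zero_rpow_of_pos hp', zero_pow hn] at h2
  have hNroot : ∀ n : ℕ, (N ^ (1 / p : ℝ)) ^ n ≠ ∞ := fun n =>
    ENNReal.pow_ne_top (ENNReal.rpow_ne_top_of_nonneg hp'.le hN)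
  have hlim : Tendsto (fun w : E =>
      (tail α (‖w‖ / 2) ^ (1 / p : ℝ)) ^ r * (N ^ (1 / p : ℝ)) ^ m
      + (N ^ (1 / p : ℝ)) ^ r * (tail β (‖w‖ / 2) ^ (1 / p : ℝ)) ^ m)
      (Bornology.cobounded E) (𝓝 0) := by
    have h1 := ENNReal.Tendsto.mul_const (hroot α (n := r) (by omega)) (Or.inr (hNroot m))
    have h2 := ENNReal.Tendsto.const_mul (hroot β (n := m) (by omega)) (Or.inr (hNroot r))
    simpa using h1.add h2
  refine tendsto_of_tendsto_of_tendsto_of_le_of_le tendsto_const_nhds hlim (fun _ => zero_le) ?_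
  intro w
  have hms : ∀ L : ℝ, MeasurableSet {y : E | L ≤ ‖y‖} := fun L =>
    measurableSet_le measurable_const measurable_norm
  have hcard : Fintype.card (Fin r) + Fintype.card (Fin m) = p := by simp; omega
  rw [loopConv, ← lintegral_add_compl _ (hms (‖w‖ / 2)), add_comm]
  refine add_le_add ?_ ?_
  · refine (holder_prod _ hp hcard (fun i y => G (α i + (w - y)))
      (fun j y => G (β j + y)) (fun i => by fun_prop) (fun j => by fun_prop) (S := tail α (‖w‖ / 2))
      (T := N) (fun i => ?_) (fun j => ?_)).trans_eq (by simp)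
    · calc ∫⁻ y in {y : E | ‖w‖ / 2 ≤ ‖y‖}ᶜ, G (α i + (w - y)) ^ p
          ≤ ∫⁻ y, {y : E | ‖w‖ / 2 ≤ ‖y‖}.indicator (fun y => G (α i + y) ^ p) (w - y) := by
            rw [← lintegral_indicator (hms _).compl]
            refine lintegral_mono fun y => ?_
            by_cases hy : ‖w‖ / 2 ≤ ‖y‖
            · simp [hy]
            · have : ‖w‖ / 2 ≤ ‖w - y‖ := by
                have := norm_sub_norm_le w y
                push Not at hy
                linarith
              simp [hy, this]
        _ = ∫⁻ y in {y : E | ‖w‖ / 2 ≤ ‖y‖}, G (α i + y) ^ p := by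
            rw [lintegral_sub_left_eq_self, lintegral_indicator (hms _)]
        _ ≤ _ := Finset.single_le_sum
            (f := fun i => ∫⁻ y in {y : E | ‖w‖ / 2 ≤ ‖y‖}, G (α i + y) ^ p)
            (fun _ _ => zero_le) (Finset.mem_univ i)
    · exact (setLIntegral_le_lintegral _ _).trans
        (lintegral_add_left_eq_self (fun y => G y ^ p) _).le
  · refine (holder_prod _ hp hcard (fun i y => G (α i + (w - y)))
      (fun j y => G (β j + y)) (fun i => by fun_prop) (fun j => by fun_prop) (S := N)
      (T := tail β (‖w‖ / 2)) (fun i => ?_) (fun j => ?_)).trans_eq (by simp)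
    · simp_rw [← add_sub_assoc]
      exact (setLIntegral_le_lintegral _ _).trans
        (lintegral_sub_left_eq_self (fun y => G y ^ p) _).le
    · exact Finset.single_le_sum
        (f := fun i => ∫⁻ y in {y : E | ‖w‖ / 2 ≤ ‖y‖}, G (β i + y) ^ p)
        (fun _ _ => zero_le) (Finset.mem_univ j)
/-! ### Averages over pairs of points of a large ball -/

/-- A bounded function vanishing at infinity has vanishing averages over the differences of two
points of `B_R`. Positive dimension is needed for the volume of `B_R` to tend to infinity. -/
theorem tendsto_average (hd : 1 ≤ Module.finrank ℝ E) {φ : E → ℝ≥0∞}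
    {N : ℝ≥0∞} (hN : N ≠ ∞) (hle : ∀ w, φ w ≤ N)
    (hlim : Tendsto φ (Bornology.cobounded E) (𝓝 0)) :
    Tendsto (fun R : ℝ => ENNReal.ofReal (R ^ (-(2 * (Module.finrank ℝ E : ℝ)))) *
      ∫⁻ x in closedBall (0 : E) R, ∫⁻ y in closedBall (0 : E) R, φ (x - y)) atTop (𝓝 0) := by
  set n := Module.finrank ℝ E with hn
  set c := volume (closedBall (0 : E) 1) with hc
  have hc0 : c ≠ 0 := (measure_closedBall_pos _ _ one_pos).ne'
  have hctop : c ≠ ∞ := measure_closedBall_lt_top.ne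
  have hq : Tendsto (fun R : ℝ => ENNReal.ofReal (R ^ (-(n : ℝ)))) atTop (𝓝 0) := by
    have := ENNReal.tendsto_ofReal (tendsto_rpow_neg_atTop (y := (n : ℝ)) (by positivity))
    simpa using this
  rw [ENNReal.tendsto_nhds_zero]
  intro δ hδ
  rcases eq_or_ne δ ∞ with rfl | hδtop
  · exact Eventually.of_forall fun _ => le_top
  -- The points with `‖x - y‖ > L` contribute at most `ε * c ^ 2`, which is made equal to `δ / 2`.
  set ε := δ / 2 / (c * c) with hε
  have hε0 : 0 < ε := ENNReal.div_pos (ENNReal.half_pos hδ.ne').ne' (ENNReal.mul_ne_top hctop hctop)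
  have hεc : ε * (c * c) = δ / 2 :=
    ENNReal.div_mul_cancel (mul_ne_zero hc0 hc0) (ENNReal.mul_ne_top hctop hctop)
  obtain ⟨L, hL⟩ : ∃ L : ℝ, ∀ w : E, L < ‖w‖ → φ w ≤ ε := by
    have h1 := (ENNReal.tendsto_nhds_zero.1 hlim) ε hε0
    obtain ⟨L, -, hL⟩ := (Metric.hasBasis_cobounded_compl_closedBall (0 : E)).eventually_iff.1 h1
    exact ⟨L, fun w hw => hL (by simpa using hw)⟩
  set V := volume (closedBall (0 : E) L) with hV
  have hVtop : V ≠ ∞ := measure_closedBall_lt_top.ne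
  have hsmall : Tendsto (fun R : ℝ => ENNReal.ofReal (R ^ (-(n : ℝ))) * (c * (N * V))) atTop
      (𝓝 0) := by
    have := ENNReal.Tendsto.mul_const (b := c * (N * V)) hq
      (Or.inr (ENNReal.mul_ne_top hctop (ENNReal.mul_ne_top hN hVtop)))
    simpa using this
  filter_upwards [eventually_gt_atTop (0 : ℝ),
    ENNReal.tendsto_nhds_zero.1 hsmall (δ / 2) (ENNReal.half_pos hδ.ne')] with R hR hRsmall
  set q := ENNReal.ofReal (R ^ (-(n : ℝ))) with hqdef
  have hqq : ENNReal.ofReal (R ^ (-(2 * (n : ℝ)))) = q * q := by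
    rw [hqdef, ← ENNReal.ofReal_mul (by positivity), ← Real.rpow_add hR]
    congr 2
    ring
  have hqV : q * volume (closedBall (0 : E) R) = c := by
    rw [Measure.addHaar_closedBall' _ _ hR.le, ← mul_assoc, hqdef,
      ← ENNReal.ofReal_mul (by positivity), ← Real.rpow_natCast, ← Real.rpow_add hR]
    simp [hc, ← hn]
  have hinner : ∀ x : E, ∫⁻ y in closedBall (0 : E) R, φ (x - y)
      ≤ ε * volume (closedBall (0 : E) R) + N * V := by
    intro x
    calc ∫⁻ y in closedBall (0 : E) R, φ (x - y)
        ≤ ∫⁻ y in closedBall (0 : E) R,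
            (ε + (closedBall (0 : E) L).indicator (fun _ => N) (x - y)) := by
          refine lintegral_mono fun y => ?_
          by_cases hy : x - y ∈ closedBall (0 : E) L
          · rw [Set.indicator_of_mem hy]
            exact (hle _).trans le_add_self
          · exact (hL _ (by simpa using hy)).trans le_self_add
      _ ≤ ε * volume (closedBall (0 : E) R) +
            ∫⁻ y, (closedBall (0 : E) L).indicator (fun _ => N) (x - y) := by
          rw [lintegral_add_left measurable_const, setLIntegral_const]
          exact add_le_add le_rfl (setLIntegral_le_lintegral _ _)
      _ = ε * volume (closedBall (0 : E) R) + N * V := by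
          rw [lintegral_sub_left_eq_self, lintegral_indicator measurableSet_closedBall,
            setLIntegral_const]
  calc ENNReal.ofReal (R ^ (-(2 * (n : ℝ)))) *
        ∫⁻ x in closedBall (0 : E) R, ∫⁻ y in closedBall (0 : E) R, φ (x - y)
      ≤ q * q * ((ε * volume (closedBall (0 : E) R) + N * V) * volume (closedBall (0 : E) R)) := by
        rw [hqq, ← setLIntegral_const]
        gcongr with x
        exact hinner x
    _ = ε * ((q * volume (closedBall (0 : E) R)) * (q * volume (closedBall (0 : E) R)))
          + q * ((q * volume (closedBall (0 : E) R)) * (N * V)) := by ring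
    _ ≤ δ / 2 + δ / 2 := by
        rw [hqV, hεc]
        gcongr
    _ = δ := ENNReal.add_halves δ

/-! ### The cyclic kernel -/

/-- The product over the cycle `x₁, x₂, x₄, x₃` for fixed translations: `r` factors on each of the
edges `x₁x₂`, `x₃x₄`, and `m` factors on each of the edges `x₂x₄`, `x₃x₁`. -/
noncomputable def loopKernel {r m : ℕ} (G : E → ℝ≥0∞) (α α' : Fin r → E) (β β' : Fin m → E)
    (x : E × E × E × E) : ℝ≥0∞ :=
  (∏ i, G (α i + (x.1 - x.2.1)) * G (α' i + (x.2.2.1 - x.2.2.2))) *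
    ∏ j, G (β j + (x.2.1 - x.2.2.2)) * G (β' j + (x.2.2.1 - x.1))

/-- For fixed `x₁, x₄` the integrals over `x₂` and `x₃` separate after enlarging their domains to
the whole space; the first is a `loopConv` and the second is at most `∫ G ^ p`. -/
theorem lintegral_loopKernel_le {r m p : ℕ} (hp : p ≠ 0) (hrm : m + r = p)
    {G : E → ℝ≥0∞} (hG : Measurable G) (α α' : Fin r → E) (β β' : Fin m → E) (B : Set E) :
    ∫⁻ x₁ in B, ∫⁻ x₂ in B, ∫⁻ x₃ in B, ∫⁻ x₄ in B, loopKernel G α α' β β' (x₁, x₂, x₃, x₄)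
      ≤ (∫⁻ x₁ in B, ∫⁻ x₄ in B, loopConv G α β (x₁ - x₄)) * ∫⁻ y, G y ^ p := by
  set N := ∫⁻ y, G y ^ p with hN
  have hmeas : Measurable (loopKernel G α α' β β') := by
    unfold loopKernel
    fun_prop
  have hmeas' := measurable_loopConv hG α β
  rw [← lintegral_mul_const _ (by fun_prop)]
  refine lintegral_mono fun x₁ => ?_
  rw [← lintegral_mul_const _ (by fun_prop)]
  calc ∫⁻ x₂ in B, ∫⁻ x₃ in B, ∫⁻ x₄ in B, loopKernel G α α' β β' (x₁, x₂, x₃, x₄)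
      = ∫⁻ x₂ in B, ∫⁻ x₄ in B, ∫⁻ x₃ in B, loopKernel G α α' β β' (x₁, x₂, x₃, x₄) :=
        lintegral_congr fun x₂ => lintegral_lintegral_swap (by fun_prop)
    _ = ∫⁻ x₄ in B, ∫⁻ x₂ in B, ∫⁻ x₃ in B, loopKernel G α α' β β' (x₁, x₂, x₃, x₄) :=
        lintegral_lintegral_swap (by fun_prop)
    _ ≤ _ := by
      refine lintegral_mono fun x₄ => ?_
      calc ∫⁻ x₂ in B, ∫⁻ x₃ in B, loopKernel G α α' β β' (x₁, x₂, x₃, x₄)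
          ≤ ∫⁻ x₂, ∫⁻ x₃, loopKernel G α α' β β' (x₁, x₂, x₃, x₄) :=
            (setLIntegral_le_lintegral _ _).trans
              (lintegral_mono fun _ => setLIntegral_le_lintegral _ _)
        _ = (∫⁻ x₂, (∏ i, G (α i + (x₁ - x₂))) * ∏ j, G (β j + (x₂ - x₄))) *
              ∫⁻ x₃, (∏ i, G (α' i + (x₃ - x₄))) * ∏ j, G (β' j + (x₃ - x₁)) := by
            rw [← lintegral_lintegral_mul (by fun_prop) (by fun_prop)]
            refine lintegral_congr fun x₂ => lintegral_congr fun x₃ => ?_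
            simp only [loopKernel, Finset.prod_mul_distrib]
            ring
        _ ≤ loopConv G α β (x₁ - x₄) * N := by
            gcongr
            · refine le_of_eq ?_
              rw [loopConv, ← lintegral_sub_right_eq_self
                (fun y => (∏ i, G (α i + (x₁ - x₄ - y))) * ∏ j, G (β j + y)) x₄]
              simp only [sub_sub_sub_cancel_right]
            · refine holder_prod_self volume hp (by simp; omega) (fun i y => G (α' i + (y - x₄)))
                (fun j y => G (β' j + (y - x₁))) (fun i => by fun_prop) (fun j => by fun_prop)
                (fun i => ?_) (fun j => ?_)
              · rw [lintegral_sub_right_eq_self (fun y => G (α' i + y) ^ p) x₄,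
                  lintegral_add_left_eq_self (fun y => G y ^ p)]
              · rw [lintegral_sub_right_eq_self (fun y => G (β' j + y) ^ p) x₁,
                  lintegral_add_left_eq_self (fun y => G y ^ p)]

/-! ### Integration against the four copies of `f` -/

theorem lintegral_blocks {m r : ℕ}
    (Φ : (Fin (m + r) → E) × (Fin (m + r) → E) × (Fin (m + r) → E) × (Fin (m + r) → E) → ℝ≥0∞)
    (hΦ : Measurable Φ) :
    ∫⁻ s : Fin m → E, ∫⁻ t : Fin m → E, ∫⁻ s' : Fin m → E, ∫⁻ t' : Fin m → E,
      ∫⁻ a : Fin r → E, ∫⁻ b : Fin r → E, ∫⁻ a' : Fin r → E, ∫⁻ b' : Fin r → E,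
        Φ (Fin.append s a, Fin.append t b, Fin.append s' a', Fin.append t' b') = ∫⁻ q, Φ q := by
  have happ : Measurable fun z : (Fin m → E) × (Fin r → E) => Fin.append z.1 z.2 := by
    refine measurable_pi_lambda _ fun i => ?_
    refine Fin.addCases (fun j => ?_) (fun j => ?_) i
    · simp only [Fin.append_left]; fun_prop
    · simp only [Fin.append_right]; fun_prop
  have h := lintegral_regroup (volume : Measure (Fin m → E)) (volume : Measure (Fin r → E))
    (fun z => Φ (Fin.append z.1 z.2.2.2.2.1, Fin.append z.2.1 z.2.2.2.2.2.1,
      Fin.append z.2.2.1 z.2.2.2.2.2.2.1, Fin.append z.2.2.2.1 z.2.2.2.2.2.2.2)) (by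
      refine hΦ.comp ?_
      exact (happ.comp (f := fun z : (Fin m → E) × (Fin m → E) × (Fin m → E) × (Fin m → E) ×
          (Fin r → E) × (Fin r → E) × (Fin r → E) × (Fin r → E) => (z.1, z.2.2.2.2.1))
          (by fun_prop)).prodMk
        ((happ.comp (f := fun z : (Fin m → E) × (Fin m → E) × (Fin m → E) × (Fin m → E) ×
          (Fin r → E) × (Fin r → E) × (Fin r → E) × (Fin r → E) => (z.2.1, z.2.2.2.2.2.1))
          (by fun_prop)).prodMk
        ((happ.comp (f := fun z : (Fin m → E) × (Fin m → E) × (Fin m → E) × (Fin m → E) ×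
          (Fin r → E) × (Fin r → E) × (Fin r → E) × (Fin r → E) => (z.2.2.1, z.2.2.2.2.2.2.1))
          (by fun_prop)).prodMk
        (happ.comp (f := fun z : (Fin m → E) × (Fin m → E) × (Fin m → E) × (Fin m → E) ×
          (Fin r → E) × (Fin r → E) × (Fin r → E) × (Fin r → E) => (z.2.2.2.1, z.2.2.2.2.2.2.2))
          (by fun_prop)))))
  refine h.trans ?_
  refine Eq.trans ?_ (lintegral_four (volume : Measure (Fin (m + r) → E)) Φ hΦ)
  rw [← lintegral_append _ (by fun_prop)]
  refine lintegral_congr fun s => lintegral_congr fun a => ?_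
  rw [← lintegral_append _ (by fun_prop)]
  refine lintegral_congr fun t => lintegral_congr fun b => ?_
  rw [← lintegral_append _ (by fun_prop)]
  refine lintegral_congr fun s' => lintegral_congr fun a' => ?_
  rw [← lintegral_append _ (by fun_prop)]

/-- The product `g ⊗ g ⊗ g ⊗ g`. -/
noncomputable def quadWeight {P : Type*} (g : P → ℝ≥0∞) (q : P × P × P × P) : ℝ≥0∞ :=
  g q.1 * (g q.2.1 * (g q.2.2.1 * g q.2.2.2))

theorem measurable_quadWeight {P : Type*} [MeasurableSpace P] {g : P → ℝ≥0∞} (hg : Measurable g) :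
    Measurable (quadWeight g) := by
  unfold quadWeight
  fun_prop

theorem lintegral_quadWeight {P : Type*} [MeasureSpace P] [SFinite (volume : Measure P)]
    {g : P → ℝ≥0∞} (hg : Measurable g) :
    ∫⁻ q, quadWeight g q = (∫⁻ y, g y) ^ 4 := by
  refine (lintegral_four (volume : Measure P) _ (measurable_quadWeight hg)).symm.trans ?_
  simp only [quadWeight]
  simp (disch := fun_prop) only [lintegral_const_mul, lintegral_mul_const]
  ring

/-- Translation invariance on a four-fold product, by invariance in each component. -/
theorem lintegral_quad_add {P : Type*} [AddCommGroup P] [MeasureSpace P] [MeasurableAdd P]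
    [SFinite (volume : Measure P)] [(volume : Measure P).IsAddRightInvariant]
    (F : P × P × P × P → ℝ≥0∞) (hF : Measurable F) (v : P × P × P × P) :
    ∫⁻ q, F (q + v) = ∫⁻ q, F q := by
  obtain ⟨v₁, v₂, v₃, v₄⟩ := v
  refine (lintegral_four (volume : Measure P) (fun q => F (q + (v₁, v₂, v₃, v₄))) ?_).symm.trans
    (Eq.trans ?_ (lintegral_four (volume : Measure P) F hF))
  · refine hF.comp (f := fun q : P × P × P × P =>
      (q.1 + v₁, q.2.1 + v₂, q.2.2.1 + v₃, q.2.2.2 + v₄)) ?_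
    fun_prop
  · simp only [Prod.mk_add_mk]
    rw [lintegral_add_right_eq_self (fun x₁ => ∫⁻ x₂, ∫⁻ x₃, ∫⁻ x₄,
      F (x₁, x₂ + v₂, x₃ + v₃, x₄ + v₄)) v₁]
    refine lintegral_congr fun x₁ => ?_
    rw [lintegral_add_right_eq_self (fun x₂ => ∫⁻ x₃, ∫⁻ x₄,
      F (x₁, x₂, x₃ + v₃, x₄ + v₄)) v₂]
    refine lintegral_congr fun x₂ => ?_
    rw [lintegral_add_right_eq_self (fun x₃ => ∫⁻ x₄, F (x₁, x₂, x₃, x₄ + v₄)) v₃]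
    refine lintegral_congr fun x₃ => ?_
    rw [lintegral_add_right_eq_self (fun x₄ => F (x₁, x₂, x₃, x₄)) v₄]

/-- The vector translating all points of the `i`-th of four configurations by the `i`-th component
of `x`. -/
def diagShift (k : ℕ) (x : E × E × E × E) :
    (Fin k → E) × (Fin k → E) × (Fin k → E) × (Fin k → E) :=
  (fun _ => x.1, fun _ => x.2.1, fun _ => x.2.2.1, fun _ => x.2.2.2)

/-- The `γ`-factors evaluated at four configurations `q = ((𝐬,𝐚), (𝐭,𝐛), (𝐬̃,𝐚̃), (𝐭̃,𝐛̃))` which are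
translated by the components of `x`. The block of length `m` comes first, so `Fin.castAdd r`
indexes `𝐬` and `Fin.natAdd m` indexes `𝐚`. -/
noncomputable def pairKernel {m r : ℕ} (G : E → ℝ≥0∞)
    (q : (Fin (m + r) → E) × (Fin (m + r) → E) × (Fin (m + r) → E) × (Fin (m + r) → E))
    (x : E × E × E × E) : ℝ≥0∞ :=
  loopKernel G
    (fun i : Fin r => q.1 (Fin.natAdd m i) - q.2.1 (Fin.natAdd m i))
    (fun i : Fin r => q.2.2.1 (Fin.natAdd m i) - q.2.2.2 (Fin.natAdd m i))
    (fun j : Fin m => q.2.1 (Fin.castAdd r j) - q.2.2.2 (Fin.castAdd r j))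
    (fun j : Fin m => q.2.2.1 (Fin.castAdd r j) - q.1 (Fin.castAdd r j)) x

/-- Each factor of `pairKernel` sees a difference of two copies, so a diagonal shift `x` of the
copies only enters through the differences of the components of `x`. -/
theorem pairKernel_add_diagShift {F : Type*} [NormedAddCommGroup F] {m r : ℕ} (G : F → ℝ≥0∞)
    (q : (Fin (m + r) → F) × (Fin (m + r) → F) × (Fin (m + r) → F) × (Fin (m + r) → F))
    (x : F × F × F × F) :
    pairKernel G (q + diagShift (m + r) x) 0 = pairKernel G q x := by
  simp only [pairKernel, loopKernel, diagShift, Prod.fst_add, Prod.snd_add, Pi.add_apply,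
    Prod.fst_zero, Prod.snd_zero, sub_zero, add_zero, add_sub_add_comm]

theorem measurable_pairKernel {m r : ℕ} {G : E → ℝ≥0∞} (hG : Measurable G) :
    Measurable fun z : ((Fin (m + r) → E) × (Fin (m + r) → E) × (Fin (m + r) → E) ×
      (Fin (m + r) → E)) × (E × E × E × E) => pairKernel G z.1 z.2 := by
  unfold pairKernel loopKernel
  fun_prop

/-- The statement for a measurable weight `g` in place of `|f|`. -/
theorem tendsto_weighted {m r : ℕ} (hd : 1 ≤ Module.finrank ℝ E) (hr : 1 ≤ r) (hm : 1 ≤ m)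
    {G : E → ℝ≥0∞} (hG : Measurable G) (hN : ∫⁻ y, G y ^ (m + r) ≠ ∞)
    {g : (Fin (m + r) → E) → ℝ≥0∞} (hg : Measurable g) (hgfin : ∫⁻ y, g y ≠ ∞) :
    Tendsto (fun R : ℝ => ENNReal.ofReal (R ^ (-(2 * (Module.finrank ℝ E : ℝ)))) *
      ∫⁻ x₁ in closedBall (0 : E) R, ∫⁻ x₂ in closedBall (0 : E) R,
      ∫⁻ x₃ in closedBall (0 : E) R, ∫⁻ x₄ in closedBall (0 : E) R,
        ∫⁻ q, quadWeight g (q - diagShift (m + r) (x₁, x₂, x₃, x₄)) * pairKernel G q 0)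
      atTop (𝓝 0) := by
  have hp : m + r ≠ 0 := by omega
  set N := ∫⁻ y, G y ^ (m + r) with hNdef
  set ν := (volume : Measure ((Fin (m + r) → E) × (Fin (m + r) → E) × (Fin (m + r) → E) ×
    (Fin (m + r) → E))).withDensity (quadWeight g) with hν
  have hWm := measurable_quadWeight hg
  have hpk := measurable_pairKernel (m := m) (r := r) hG
  have : IsFiniteMeasure ν := isFiniteMeasure_withDensity (by
    rw [lintegral_quadWeight hg]
    exact ENNReal.pow_ne_top hgfin)
  set n := Module.finrank ℝ E with hn
  set c := volume (closedBall (0 : E) 1) with hc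
  have hctop : c ≠ ∞ := measure_closedBall_lt_top.ne
  have hshift : ∀ x : E × E × E × E,
      ∫⁻ q, quadWeight g (q - diagShift (m + r) x) * pairKernel G q 0
        = ∫⁻ q, pairKernel G q x ∂ν := by
    intro x
    rw [hν, lintegral_withDensity_eq_lintegral_mul _ hWm (by fun_prop),
      ← lintegral_quad_add _ (by fun_prop) (diagShift (m + r) x)]
    refine lintegral_congr fun q => ?_
    rw [add_sub_cancel_right, pairKernel_add_diagShift, Pi.mul_apply]
  have hswap : ∀ B : Set E, ∫⁻ x₁ in B, ∫⁻ x₂ in B, ∫⁻ x₃ in B, ∫⁻ x₄ in B,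
        ∫⁻ q, quadWeight g (q - diagShift (m + r) (x₁, x₂, x₃, x₄)) * pairKernel G q 0
      = ∫⁻ q, (∫⁻ x₁ in B, ∫⁻ x₂ in B, ∫⁻ x₃ in B, ∫⁻ x₄ in B,
          pairKernel G q (x₁, x₂, x₃, x₄)) ∂ν := by
    intro B
    simp only [hshift]
    rw [lintegral_four (volume.restrict B) (fun x => ∫⁻ q, pairKernel G q x ∂ν) (by fun_prop),
      lintegral_lintegral_swap (by fun_prop)]
    refine lintegral_congr fun q => ?_
    rw [lintegral_four (volume.restrict B) (fun x => pairKernel G q x) (by fun_prop)]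
  simp only [hswap]
  have hle : ∀ (q : (Fin (m + r) → E) × (Fin (m + r) → E) × (Fin (m + r) → E) ×
      (Fin (m + r) → E)) (B : Set E), _ := fun q B => lintegral_loopKernel_le hp rfl hG
    (fun i : Fin r => q.1 (Fin.natAdd m i) - q.2.1 (Fin.natAdd m i))
    (fun i : Fin r => q.2.2.1 (Fin.natAdd m i) - q.2.2.2 (Fin.natAdd m i))
    (fun j : Fin m => q.2.1 (Fin.castAdd r j) - q.2.2.2 (Fin.castAdd r j))
    (fun j : Fin m => q.2.2.1 (Fin.castAdd r j) - q.1 (Fin.castAdd r j)) B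
  have hmeasR : ∀ B : Set E, Measurable fun q => ∫⁻ x₁ in B, ∫⁻ x₂ in B, ∫⁻ x₃ in B,
      ∫⁻ x₄ in B, pairKernel (m := m) (r := r) G q (x₁, x₂, x₃, x₄) := by
    intro B
    fun_prop
  simp only [← lintegral_const_mul _ (hmeasR _)]
  rw [← lintegral_zero (μ := ν)]
  refine tendsto_lintegral_filter_of_dominated_convergence (fun _ => c * c * N * N)
    (Eventually.of_forall fun R => (hmeasR _).const_mul _) ?_ ?_ (ae_of_all _ fun q => ?_)
  · filter_upwards [eventually_gt_atTop (0 : ℝ)] with R hR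
    refine ae_of_all _ fun q => ?_
    refine (mul_le_mul_right (hle q (closedBall 0 R)) _).trans ?_
    have hVR : ∫⁻ x₁ in closedBall (0 : E) R, ∫⁻ x₄ in closedBall (0 : E) R,
        loopConv G (fun i : Fin r => q.1 (Fin.natAdd m i) - q.2.1 (Fin.natAdd m i))
          (fun j : Fin m => q.2.1 (Fin.castAdd r j) - q.2.2.2 (Fin.castAdd r j)) (x₁ - x₄)
        ≤ N * volume (closedBall (0 : E) R) * volume (closedBall (0 : E) R) := by
      rw [← setLIntegral_const, ← setLIntegral_const]
      exact lintegral_mono fun _ => lintegral_mono fun _ => loopConv_le hp rfl hG _ _ _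
    refine (mul_le_mul_right (mul_le_mul_left hVR _) _).trans_eq ?_
    have hone : ENNReal.ofReal (R ^ (-(2 * (n : ℝ)))) * ENNReal.ofReal (R ^ n) *
        ENNReal.ofReal (R ^ n) = 1 := by
      rw [← ENNReal.ofReal_mul (by positivity), ← ENNReal.ofReal_mul (by positivity),
        ← Real.rpow_natCast, ← Real.rpow_add hR, ← Real.rpow_add hR]
      ring_nf
      simp
    rw [Measure.addHaar_closedBall' _ _ hR.le, ← hn, ← hc]
    calc _ = (ENNReal.ofReal (R ^ (-(2 * (n : ℝ)))) * ENNReal.ofReal (R ^ n) *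
        ENNReal.ofReal (R ^ n)) * (c * c * N * N) := by ring
      _ = _ := by rw [hone, one_mul]
  · rw [lintegral_const]
    exact ENNReal.mul_ne_top (ENNReal.mul_ne_top (ENNReal.mul_ne_top
      (ENNReal.mul_ne_top hctop hctop) hN) hN) (measure_ne_top _ _)
  · have hlim := ENNReal.Tendsto.mul_const (b := N) (tendsto_average hd hN
      (loopConv_le hp rfl hG
        (fun i : Fin r => q.1 (Fin.natAdd m i) - q.2.1 (Fin.natAdd m i))
        (fun j : Fin m => q.2.1 (Fin.castAdd r j) - q.2.2.2 (Fin.castAdd r j)))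
      (tendsto_loopConv hr hm rfl hG hN _ _)) (Or.inr hN)
    rw [zero_mul] at hlim
    refine tendsto_of_tendsto_of_tendsto_of_le_of_le tendsto_const_nhds hlim
      (fun _ => zero_le) fun R => ?_
    refine (mul_le_mul_right (hle q (closedBall 0 R)) _).trans_eq ?_
    rw [mul_assoc]
end

/-- An integrable function is only almost everywhere measurable. Its absolute value has an
everywhere larger measurable majorant with finite integral, infinite on a measurable null set
outside of which `f` agrees with a measurable function. A pointwise bound passes through iterated
integrals without any measurability of `f`. -/
theorem exists_majorant {Ω : Type*} [MeasurableSpace Ω] {μ : Measure Ω} {f : Ω → ℝ}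
    (hf : Integrable f μ) :
    ∃ g : Ω → ℝ≥0∞, Measurable g ∧ ∫⁻ y, g y ∂μ ≠ ∞ ∧ ∀ y, ENNReal.ofReal |f y| ≤ g y := by
  obtain ⟨f₀, hf₀, hff₀⟩ := hf.1
  set Z := toMeasurable μ {y | f y ≠ f₀ y} with hZ
  have hZ0 : μ Z = 0 := by rw [hZ, measure_toMeasurable]; exact hff₀
  have hZm : MeasurableSet Z := measurableSet_toMeasurable _ _
  refine ⟨fun y => ENNReal.ofReal |f₀ y| + Z.indicator (fun _ => ∞) y, ?_, ?_, fun y => ?_⟩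
  · have := hf₀.measurable
    exact (by fun_prop : Measurable fun y => ENNReal.ofReal |f₀ y|).add
      (measurable_const.indicator hZm)
  · rw [lintegral_add_right _ (measurable_const.indicator hZm), lintegral_indicator hZm,
      setLIntegral_const, hZ0, mul_zero, add_zero]
    have := (hf.congr hff₀).2
    rw [hasFiniteIntegral_iff_norm] at this
    simpa [Real.norm_eq_abs] using this.ne
  · by_cases hy : y ∈ Z
    · simp [hy]
    · have : f y = f₀ y := by
        by_contra hne
        exact hy (subset_toMeasurable μ _ hne)
      simp [this]

/-! ### The contraction bound -/

/-- Contraction bound from the fixed-chaos CLT: with `γ ∈ L^p(ℝ^d)`, `f ∈ L¹(ℝ^{pd})`,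
an integer `p ≥ 2` written as `p = m + r` with `r ∈ {1,…,p-1}` (`m = p - r`), and
`f^x(y₁,…,y_p) = f(y₁-x,…,y_p-x)`, the quantity
`I_r(R) = ∫_{B_R⁴} ∫_{(ℝ^d)^{4p}} |f^{x₁}(𝐬,𝐚)| |f^{x₂}(𝐭,𝐛)| |f^{x₃}(𝐬̃,𝐚̃)| |f^{x₄}(𝐭̃,𝐛̃)|
  ∏_i |γ(a_i-b_i)||γ(ã_i-b̃_i)| ∏_j |γ(t_j-t̃_j)||γ(s̃_j-s_j)|`
satisfies `R^{-2d} I_r(R) → 0` as `R → ∞`. -/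
theorem stmt_10 (d p r m : ℕ) (hd : 1 ≤ d) (hr : 1 ≤ r) (hm : 1 ≤ m) (hrm : m + r = p)
    (γ : EuclideanSpace ℝ (Fin d) → ℝ) (hγm : Measurable γ)
    (hγ : Integrable (fun x => |γ x| ^ p))
    (f : (Fin p → EuclideanSpace ℝ (Fin d)) → ℝ) (hf : Integrable f) :
    Tendsto
      (fun R : ℝ => ENNReal.ofReal (R ^ (-(2 * (d : ℝ)))) *
        ∫⁻ x₁ in closedBall (0 : EuclideanSpace ℝ (Fin d)) R,
        ∫⁻ x₂ in closedBall (0 : EuclideanSpace ℝ (Fin d)) R,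
        ∫⁻ x₃ in closedBall (0 : EuclideanSpace ℝ (Fin d)) R,
        ∫⁻ x₄ in closedBall (0 : EuclideanSpace ℝ (Fin d)) R,
        ∫⁻ s : Fin m → EuclideanSpace ℝ (Fin d),
        ∫⁻ t : Fin m → EuclideanSpace ℝ (Fin d),
        ∫⁻ s' : Fin m → EuclideanSpace ℝ (Fin d),
        ∫⁻ t' : Fin m → EuclideanSpace ℝ (Fin d),
        ∫⁻ a : Fin r → EuclideanSpace ℝ (Fin d),
        ∫⁻ b : Fin r → EuclideanSpace ℝ (Fin d),
        ∫⁻ a' : Fin r → EuclideanSpace ℝ (Fin d),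
        ∫⁻ b' : Fin r → EuclideanSpace ℝ (Fin d),
          ENNReal.ofReal
            (|f (fun i => Fin.append s a (Fin.cast hrm.symm i) - x₁)| *
             |f (fun i => Fin.append t b (Fin.cast hrm.symm i) - x₂)| *
             |f (fun i => Fin.append s' a' (Fin.cast hrm.symm i) - x₃)| *
             |f (fun i => Fin.append t' b' (Fin.cast hrm.symm i) - x₄)| *
             (∏ i, |γ (a i - b i)| * |γ (a' i - b' i)|) *
             (∏ j, |γ (t j - t' j)| * |γ (s' j - s j)|)))
      atTop (𝓝 0) := by
  subst hrm
  obtain ⟨g, hg, hgfin, hfg⟩ := exists_majorant hf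
  set G : EuclideanSpace ℝ (Fin d) → ℝ≥0∞ := fun x => ENNReal.ofReal |γ x| with hGdef
  have hG : Measurable G := by fun_prop
  have hp : m + r ≠ 0 := by omega
  set N := ∫⁻ y, G y ^ (m + r) with hNdef
  have hN : N ≠ ∞ := by
    have h := hγ.2
    rw [hasFiniteIntegral_iff_norm] at h
    refine ne_of_lt (lt_of_eq_of_lt ?_ h)
    refine lintegral_congr fun y => ?_
    rw [hGdef, ← ENNReal.ofReal_pow (abs_nonneg _), Real.norm_of_nonneg (by positivity)]
  have hlim := tendsto_weighted (E := EuclideanSpace ℝ (Fin d)) (by simpa using hd) hr hm hG hN hg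
    hgfin
  rw [finrank_euclideanSpace_fin] at hlim
  refine tendsto_of_tendsto_of_tendsto_of_le_of_le tendsto_const_nhds hlim
    (fun _ => zero_le) fun R => ?_
  refine mul_le_mul_right (lintegral_mono fun x₁ => lintegral_mono fun x₂ =>
    lintegral_mono fun x₃ => lintegral_mono fun x₄ => ?_) _
  have hWm := measurable_quadWeight hg
  have hpk := measurable_pairKernel (m := m) (r := r) hG
  rw [← lintegral_blocks (fun q => quadWeight g (q - diagShift (m + r) (x₁, x₂, x₃, x₄)) *
    pairKernel G q 0) (by fun_prop)]
  refine lintegral_mono fun s => lintegral_mono fun t => lintegral_mono fun s' =>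
    lintegral_mono fun t' => lintegral_mono fun a => lintegral_mono fun b =>
    lintegral_mono fun a' => lintegral_mono fun b' => ?_
  have hGabs : ∀ x, ENNReal.ofReal |γ x| = G x := fun _ => rfl
  rw [ENNReal.ofReal_mul (by positivity), ENNReal.ofReal_mul (by positivity),
    ENNReal.ofReal_mul (by positivity), ENNReal.ofReal_mul (by positivity),
    ENNReal.ofReal_mul (by positivity), ENNReal.ofReal_prod_of_nonneg (fun _ _ => by positivity),
    ENNReal.ofReal_prod_of_nonneg (fun _ _ => by positivity), mul_assoc _ (∏ i, _)]
  refine mul_le_mul' ?_ (le_of_eq ?_)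
  · rw [quadWeight, mul_assoc, mul_assoc]
    exact mul_le_mul' (hfg _) (mul_le_mul' (hfg _) (mul_le_mul' (hfg _) (hfg _)))
  · simp only [ENNReal.ofReal_mul (abs_nonneg _), hGabs, pairKernel, loopKernel, Fin.append_left,
      Fin.append_right, Prod.fst_zero, Prod.snd_zero, sub_zero, add_zero]
end

section
/- Let d ≥ 1 and let m be a finite Borel measure on ℝ^d. Define Ψ̂(h) = m({x ∈ ℝ^d : ‖x‖ ≤ h}) for h > 0, and for R > 0 define V(R) = (2πR)^d ∫_{ℝ^d ∖ {0}} ‖x‖^{-d} J_{d/2}(R‖x‖)² m(dx). If Maruyama's condition holds, namely 0 < liminf_{h↓0} h^{-d} Ψ̂(h) ≤ limsup_{h↓0} h^{-d} Ψ̂(h) < ∞, then 0 < liminf_{R→∞} R^{-d} V(R) ≤ limsup_{R→∞} R^{-d} V(R) < ∞. -/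
/-!
Put `I(y) = ∫₀^π sin^d θ cos (y cos θ) dθ`, so that `J_{d/2}(y)² = G⁻² (y/2)^d I(y)²` for `y ≥ 0`,
with `G = √π Γ(d/2 + 1/2)`. The powers of `‖x‖` cancel, and
`R^{-d} V(R) = (π^d / G²) R^d ∫_{x ≠ 0} I(R‖x‖)² m(dx)`.

*Lower bound.* `I` is bounded below by a positive constant on `[0, 1]`, so the integral is at least
a constant times `m(B_{1/R})`, the origin being `m`-null by the upper Maruyama bound.

*Upper bound.* One needs the decay `I(y)² = O(y^{-(d+1)})`, that is `J_{d/2}(y)² = O(1/y)`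
(`bI_decay`). With `S = -I'`, integration by parts gives Bessel's equation in the form
`S' = I - ((d+1)/y) S`, and the corrected energy `E = y^{d+1}(I² + S²) - (d+1) y^d I S` satisfies
`E' = (d+1) y^{d-1} I S ≤ (d+1) y^{-2} E` for `y ≥ d+1`. Hence `exp((d+1)/y) E(y)` is
antitone there and `E` is bounded. The decay is then summed over the dyadic balls
`‖x‖ ≤ 2^{k+1}/R`, whose measure is `O((2^{k+1}/R)^d)`; this leaves a convergent geometric series.
-/

open MeasureTheory Filter Metric
open scoped Topology ENNReal

/-! ### The oscillatory integral and its differential equation -/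

/-- The oscillatory integral `I(x) = ∫₀^π sin^d θ cos (x cos θ) dθ` in Poisson's representation of
`J_{d/2}`. -/
noncomputable def bI (d : ℕ) (x : ℝ) : ℝ :=
  ∫ θ in (0 : ℝ)..Real.pi, Real.sin θ ^ d * Real.cos (x * Real.cos θ)

/-- `S = -I'`, where `I` is `bI d`. -/
noncomputable def bS (d : ℕ) (x : ℝ) : ℝ :=
  ∫ θ in (0 : ℝ)..Real.pi, Real.sin θ ^ d * Real.cos θ * Real.sin (x * Real.cos θ)

lemma bI_hasDerivAt (d : ℕ) (x : ℝ) : HasDerivAt (bI d) (-bS d x) x := by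
  have key := (intervalIntegral.hasDerivAt_integral_of_dominated_loc_of_deriv_le
    (μ := volume) (a := 0) (b := Real.pi) (s := Set.univ) (x₀ := x) (bound := fun _ => (1 : ℝ))
    (F := fun x θ => Real.sin θ ^ d * Real.cos (x * Real.cos θ))
    (F' := fun x θ => -(Real.sin θ ^ d * Real.cos θ * Real.sin (x * Real.cos θ)))
    univ_mem
    (Eventually.of_forall fun y => (by fun_prop : Continuous _).aestronglyMeasurable)
    ((by fun_prop : Continuous _).intervalIntegrable _ _)
    (by fun_prop : Continuous _).aestronglyMeasurable
    (Eventually.of_forall fun θ _ y _ => ?_) intervalIntegrable_const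
    (Eventually.of_forall fun θ _ y _ => ?_)).2
  · rw [intervalIntegral.integral_neg] at key
    exact key
  · rw [norm_neg, norm_mul, norm_mul, norm_pow]
    have h1 := Real.abs_sin_le_one θ
    have h2 := Real.abs_cos_le_one θ
    have h3 := Real.abs_sin_le_one (y * Real.cos θ)
    exact mul_le_one₀ (mul_le_one₀ (pow_le_one₀ (norm_nonneg _) h1) (norm_nonneg _) h2)
      (norm_nonneg _) h3
  · have h := (((hasDerivAt_id y).mul_const (Real.cos θ)).cos).const_mul (Real.sin θ ^ d)
    refine h.congr_deriv ?_
    simp only [id]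
    ring

lemma bS_hasDerivAt_aux (d : ℕ) (x : ℝ) : HasDerivAt (bS d)
    (∫ θ in (0 : ℝ)..Real.pi, Real.sin θ ^ d * Real.cos θ ^ 2 * Real.cos (x * Real.cos θ)) x := by
  refine (intervalIntegral.hasDerivAt_integral_of_dominated_loc_of_deriv_le
    (μ := volume) (a := 0) (b := Real.pi) (s := Set.univ) (x₀ := x) (bound := fun _ => (1 : ℝ))
    (F := fun x θ => Real.sin θ ^ d * Real.cos θ * Real.sin (x * Real.cos θ))
    (F' := fun x θ => Real.sin θ ^ d * Real.cos θ ^ 2 * Real.cos (x * Real.cos θ))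
    univ_mem
    (Eventually.of_forall fun y => (by fun_prop : Continuous _).aestronglyMeasurable)
    ((by fun_prop : Continuous _).intervalIntegrable _ _)
    (by fun_prop : Continuous _).aestronglyMeasurable
    (Eventually.of_forall fun θ _ y _ => ?_) intervalIntegrable_const
    (Eventually.of_forall fun θ _ y _ => ?_)).2
  · rw [norm_mul, norm_mul, norm_pow, norm_pow]
    have h1 := Real.abs_sin_le_one θ
    have h2 := Real.abs_cos_le_one θ
    have h3 := Real.abs_cos_le_one (y * Real.cos θ)
    exact mul_le_one₀ (mul_le_one₀ (pow_le_one₀ (norm_nonneg _) h1) (by positivity)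
      (pow_le_one₀ (norm_nonneg _) h2)) (norm_nonneg _) h3
  · have h := (((hasDerivAt_id y).mul_const (Real.cos θ)).sin).const_mul
      (Real.sin θ ^ d * Real.cos θ)
    refine h.congr_deriv ?_
    simp only [id]
    ring

/-- Bessel's equation for `I`, obtained by integrating the `θ`-derivative of
`sin^{d+1} θ sin (x cos θ)` over `[0, π]`. -/
lemma bS_hasDerivAt (d : ℕ) {x : ℝ} (hx : x ≠ 0) :
    HasDerivAt (bS d) (bI d x - (d + 1) / x * bS d x) x := by
  refine (bS_hasDerivAt_aux d x).congr_deriv ?_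
  set T := ∫ θ in (0 : ℝ)..Real.pi,
    Real.sin θ ^ d * Real.cos θ ^ 2 * Real.cos (x * Real.cos θ) with hT
  have h0 : ∫ θ in (0 : ℝ)..Real.pi,
      ((d + 1) * (Real.sin θ ^ d * Real.cos θ * Real.sin (x * Real.cos θ))
        - x * (Real.sin θ ^ d * Real.cos (x * Real.cos θ)
          - Real.sin θ ^ d * Real.cos θ ^ 2 * Real.cos (x * Real.cos θ))) = 0 := by
    rw [intervalIntegral.integral_eq_sub_of_hasDerivAt
      (f := fun θ => Real.sin θ ^ (d + 1) * Real.sin (x * Real.cos θ))]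
    · simp
    · intro θ _
      have h := ((Real.hasDerivAt_sin θ).pow (d + 1)).mul
        (((Real.hasDerivAt_cos θ).const_mul x).sin)
      refine h.congr_deriv ?_
      have hc : Real.cos θ ^ 2 = 1 - Real.sin θ ^ 2 := Real.cos_sq' θ
      rw [hc]
      simp only [Pi.pow_apply, Nat.add_sub_cancel]
      push_cast
      ring
    · exact (by fun_prop : Continuous _).intervalIntegrable _ _
  have h1 : (d + 1) * bS d x - x * (bI d x - T) = 0 := by
    rw [← h0, intervalIntegral.integral_sub, intervalIntegral.integral_const_mul,
      intervalIntegral.integral_const_mul, intervalIntegral.integral_sub]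
    · rfl
    all_goals exact (by fun_prop : Continuous _).intervalIntegrable _ _
  field_simp
  linarith

/-! ### Energy estimate and decay -/

/-- The energy `x^{d+1}(I² + S²)` together with the cross term that cancels the part of its
derivative which is not integrable at infinity. -/
noncomputable def bE (d : ℕ) (x : ℝ) : ℝ :=
  x ^ (d + 1) * (bI d x ^ 2 + bS d x ^ 2) - (d + 1) * x ^ d * (bI d x * bS d x)

lemma bE_hasDerivAt (d : ℕ) (hd : 1 ≤ d) {x : ℝ} (hx : x ≠ 0) :
    HasDerivAt (bE d) ((d + 1) * x ^ (d - 1) * (bI d x * bS d x)) x := by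
  have hI := bI_hasDerivAt d x
  have hS := bS_hasDerivAt d hx
  have h := ((hasDerivAt_pow (d + 1) x).mul ((hI.pow 2).add (hS.pow 2))).sub
    (((hasDerivAt_pow d x).const_mul ((d : ℝ) + 1)).mul (hI.mul hS))
  refine h.congr_deriv ?_
  obtain ⟨e, rfl⟩ := Nat.exists_eq_add_of_le' hd
  simp only [Pi.pow_apply, Pi.add_apply, Pi.mul_apply, Nat.add_sub_cancel]
  push_cast
  field_simp
  ring

lemma bE_lower (d : ℕ) {x : ℝ} (hx : (d : ℝ) + 1 ≤ x) :
    x ^ (d + 1) * (bI d x ^ 2 + bS d x ^ 2) ≤ 2 * bE d x := by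
  have hx0 : 0 < x := lt_of_lt_of_le (by positivity) hx
  have h1 : (d + 1) * (2 * (bI d x * bS d x)) ≤ x * (bI d x ^ 2 + bS d x ^ 2) := by
    have : 2 * (bI d x * bS d x) ≤ bI d x ^ 2 + bS d x ^ 2 := by
      nlinarith [sq_nonneg (bI d x - bS d x)]
    calc _ ≤ ((d : ℝ) + 1) * (bI d x ^ 2 + bS d x ^ 2) := by gcongr
      _ ≤ _ := by gcongr
  have h2 := mul_le_mul_of_nonneg_left h1 (pow_pos hx0 d).le
  unfold bE
  rw [pow_succ]
  linarith

lemma bE_bounded (d : ℕ) (hd : 1 ≤ d) : ∃ K : ℝ, ∀ x : ℝ, (d : ℝ) + 1 ≤ x → bE d x ≤ K := by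
  have hpos : ∀ x : ℝ, (d : ℝ) + 1 ≤ x → 0 < x := fun x hx => lt_of_lt_of_le (by positivity) hx
  have hder : ∀ x : ℝ, (d : ℝ) + 1 ≤ x →
      HasDerivAt (fun x => bE d x * Real.exp (((d : ℝ) + 1) * x⁻¹))
        ((d + 1) * x ^ (d - 1) * (bI d x * bS d x) * Real.exp (((d : ℝ) + 1) * x⁻¹) +
          bE d x * (Real.exp (((d : ℝ) + 1) * x⁻¹) * (((d : ℝ) + 1) * (-(x ^ 2)⁻¹)))) x := by
    intro x hx
    have hx0 := (hpos x hx).ne'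
    exact (bE_hasDerivAt d hd hx0).mul (((hasDerivAt_inv hx0).const_mul ((d : ℝ) + 1)).exp)
  have hanti : AntitoneOn (fun x => bE d x * Real.exp (((d : ℝ) + 1) * x⁻¹))
      (Set.Ici ((d : ℝ) + 1)) := by
    refine antitoneOn_of_hasDerivWithinAt_nonpos (convex_Ici _)
      (fun x hx => (hder x hx).continuousAt.continuousWithinAt)
      (fun x hx => (hder x (interior_subset hx)).hasDerivWithinAt) ?_
    intro x hx
    have hx' : (d : ℝ) + 1 ≤ x := interior_subset hx
    have hx0 := hpos x hx'
    have h1 := bE_lower d hx'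
    have h2 : x ^ (d + 1) * (2 * (bI d x * bS d x)) ≤
        x ^ (d + 1) * (bI d x ^ 2 + bS d x ^ 2) := by
      gcongr
      nlinarith [sq_nonneg (bI d x - bS d x)]
    have h3 : x ^ (d - 1) * (bI d x * bS d x) ≤ bE d x * (x ^ 2)⁻¹ := by
      rw [← div_eq_mul_inv, le_div_iff₀ (by positivity)]
      have : x ^ (d + 1) = x ^ (d - 1) * x ^ 2 := by
        rw [← pow_add]; congr 1; omega
      rw [this] at h1 h2
      linarith
    have h4 : 0 ≤ ((d : ℝ) + 1) * Real.exp (((d : ℝ) + 1) * x⁻¹) := by positivity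
    have h5 := mul_le_mul_of_nonneg_left h3 h4
    linarith
  refine ⟨bE d (d + 1) * Real.exp (((d : ℝ) + 1) * ((d : ℝ) + 1)⁻¹), fun x hx => ?_⟩
  have h := hanti (Set.self_mem_Ici) hx hx
  refine le_trans ?_ h
  have hx0 := hpos x hx
  have hE : 0 ≤ bE d x := by
    have := bE_lower d hx
    have h2 : 0 ≤ x ^ (d + 1) * (bI d x ^ 2 + bS d x ^ 2) := by positivity
    linarith
  exact le_mul_of_one_le_right hE (Real.one_le_exp (by positivity))

lemma bI_abs_le (d : ℕ) (x : ℝ) : |bI d x| ≤ Real.pi := by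
  have h := intervalIntegral.norm_integral_le_of_norm_le_const (a := 0) (b := Real.pi) (C := 1)
    (f := fun θ => Real.sin θ ^ d * Real.cos (x * Real.cos θ)) (fun θ _ => by
      rw [norm_mul, norm_pow]
      exact mul_le_one₀ (pow_le_one₀ (norm_nonneg _) (Real.abs_sin_le_one θ)) (norm_nonneg _)
        (Real.abs_cos_le_one _))
  simpa [bI, abs_of_pos Real.pi_pos] using h

/-- Equivalent to the classical decay `J_{d/2}(x)² = O(1/x)`. -/
lemma bI_decay (d : ℕ) (hd : 1 ≤ d) :
    ∃ C : ℝ, 0 ≤ C ∧ (∀ x, bI d x ^ 2 ≤ C) ∧ ∀ x : ℝ, 0 < x → bI d x ^ 2 * x ^ (d + 1) ≤ C := by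
  obtain ⟨K, hK⟩ := bE_bounded d hd
  have hb : ∀ x, bI d x ^ 2 ≤ Real.pi ^ 2 := fun x => by
    rw [← sq_abs]
    exact pow_le_pow_left₀ (abs_nonneg _) (bI_abs_le d x) 2
  set A := Real.pi ^ 2 * ((d : ℝ) + 1) ^ (d + 1)
  have hA : 0 ≤ A := by positivity
  refine ⟨Real.pi ^ 2 + A + |2 * K|, by positivity, fun x => ?_, fun x hx => ?_⟩
  · linarith [hb x, abs_nonneg (2 * K)]
  · rcases le_total x ((d : ℝ) + 1) with h | h
    · have : bI d x ^ 2 * x ^ (d + 1) ≤ A := by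
        exact mul_le_mul (hb x) (pow_le_pow_left₀ hx.le h _) (by positivity) (by positivity)
      linarith [abs_nonneg (2 * K), sq_nonneg Real.pi]
    · have h1 := bE_lower d h
      have h2 := hK x h
      have h3 : 0 ≤ x ^ (d + 1) * bS d x ^ 2 := by positivity
      nlinarith [le_abs_self (2 * K), sq_nonneg Real.pi]

/-! ### Lower bound near the origin -/

lemma bI_lower (d : ℕ) : ∃ c : ℝ, 0 < c ∧ ∀ x : ℝ, |x| ≤ 1 → c ≤ bI d x ^ 2 := by
  have hc1 : 0 < Real.cos 1 := Real.cos_one_pos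
  have hs : 0 < ∫ θ in (0 : ℝ)..Real.pi, Real.sin θ ^ d := integral_sin_pow_pos d
  refine ⟨((∫ θ in (0 : ℝ)..Real.pi, Real.sin θ ^ d) * Real.cos 1) ^ 2, by positivity,
    fun x hx => ?_⟩
  refine pow_le_pow_left₀ (by positivity) ?_ 2
  rw [← intervalIntegral.integral_mul_const]
  refine intervalIntegral.integral_mono_on Real.pi_pos.le
    ((by fun_prop : Continuous _).intervalIntegrable _ _)
    ((by fun_prop : Continuous _).intervalIntegrable _ _) fun θ hθ => ?_
  have h0 := Real.sin_nonneg_of_mem_Icc hθ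
  have h1 : |x * Real.cos θ| ≤ 1 := by
    rw [abs_mul]
    exact mul_le_one₀ hx (abs_nonneg _) (Real.abs_cos_le_one θ)
  have h2 : Real.cos 1 ≤ Real.cos (x * Real.cos θ) := by
    rw [← Real.cos_abs (x * _)]
    exact Real.cos_le_cos_of_nonneg_of_le_pi (abs_nonneg _) (by linarith [Real.pi_gt_three]) h1
  gcongr

/-! ### Reduction of the variance to the oscillatory integral -/

lemma besselJ_sq_s13 (d : ℕ) {y : ℝ} (hy : 0 ≤ y) :
    besselJ ((d : ℝ) / 2) y ^ 2 =
      (y / 2) ^ d / (Real.sqrt Real.pi * Real.Gamma ((d : ℝ) / 2 + 1 / 2)) ^ 2 * bI d y ^ 2 := by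
  have h2 : (2 : ℝ) * ((d : ℝ) / 2) = d := by ring
  have hI : (∫ θ in (0 : ℝ)..Real.pi,
      Real.sin θ ^ (2 * ((d : ℝ) / 2)) * Real.cos (y * Real.cos θ)) = bI d y := by
    simp only [h2, Real.rpow_natCast]
    rfl
  have hp : ((y / 2) ^ ((d : ℝ) / 2)) ^ 2 = (y / 2) ^ d := by
    rw [← Real.rpow_natCast, ← Real.rpow_mul (by positivity), ← Real.rpow_natCast]
    congr 1
    push_cast
    ring
  rw [besselJ, hI, mul_pow, div_pow, hp]

/-- After cancellation of the powers of `‖x‖`, the normalised variance is a constant times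
`R^d ∫ I(R‖x‖)² dm`. -/
lemma variance_eq (d : ℕ) (m : Measure (EuclideanSpace ℝ (Fin d))) (h0 : m {0} = 0)
    {R : ℝ} (hR : 0 < R) :
    R ^ (-(d : ℝ)) * ((2 * Real.pi * R) ^ d *
          ∫ x in ({0}ᶜ : Set (EuclideanSpace ℝ (Fin d))),
            ‖x‖ ^ (-(d : ℝ)) * besselJ ((d : ℝ) / 2) (R * ‖x‖) ^ 2 ∂m) =
    Real.pi ^ d / (Real.sqrt Real.pi * Real.Gamma ((d : ℝ) / 2 + 1 / 2)) ^ 2 *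
      (R ^ d * ∫ x, bI d (R * ‖x‖) ^ 2 ∂m) := by
  set G := Real.sqrt Real.pi * Real.Gamma ((d : ℝ) / 2 + 1 / 2) with hG
  have e1 : ∫ x in ({0}ᶜ : Set (EuclideanSpace ℝ (Fin d))),
      ‖x‖ ^ (-(d : ℝ)) * besselJ ((d : ℝ) / 2) (R * ‖x‖) ^ 2 ∂m =
      ∫ x in ({0}ᶜ : Set (EuclideanSpace ℝ (Fin d))),
        (R / 2) ^ d / G ^ 2 * bI d (R * ‖x‖) ^ 2 ∂m := by
    refine setIntegral_congr_fun (measurableSet_singleton _).compl fun x hx => ?_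
    have hx0 : 0 < ‖x‖ := norm_pos_iff.mpr hx
    rw [besselJ_sq_s13 d (by positivity), ← hG, Real.rpow_neg hx0.le, Real.rpow_natCast]
    rw [show R * ‖x‖ / 2 = R / 2 * ‖x‖ by ring, mul_pow (R / 2)]
    field_simp
  have e2 : m.restrict ({0}ᶜ : Set (EuclideanSpace ℝ (Fin d))) = m :=
    Measure.restrict_eq_self_of_ae_mem (compl_mem_ae_iff.mpr h0)
  rw [e1, e2, integral_const_mul, Real.rpow_neg hR.le, Real.rpow_natCast, div_pow, mul_pow, mul_pow]
  have : R ^ d ≠ 0 := by positivity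
  field_simp

/-! ### Integration against the measure -/

lemma measure_upper (d : ℕ) (m : Measure (EuclideanSpace ℝ (Fin d))) [IsFiniteMeasure m]
    (hup : Filter.limsup
      (fun h : ℝ => ENNReal.ofReal (h ^ (-(d : ℝ))) *
        m (closedBall (0 : EuclideanSpace ℝ (Fin d)) h)) (𝓝[>] (0 : ℝ)) < ⊤) :
    ∃ C : ℝ, 0 ≤ C ∧ ∀ h : ℝ, 0 < h →
      m (closedBall (0 : EuclideanSpace ℝ (Fin d)) h) ≤ ENNReal.ofReal (C * h ^ d) := by
  obtain ⟨c, hc1, hc2⟩ := exists_between hup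
  have hev := eventually_lt_of_limsup_lt hc1
  obtain ⟨δ, hδ, hδ'⟩ := (mem_nhdsGT_iff_exists_Ioo_subset).1 hev
  have hδ0 : (0 : ℝ) < δ := hδ
  have hM : 0 ≤ m.real Set.univ := measureReal_nonneg
  refine ⟨c.toReal + m.real Set.univ / δ ^ d, by positivity, fun h hh => ?_⟩
  rcases lt_or_ge h δ with hlt | hge
  · have h1 : ENNReal.ofReal (h ^ (-(d : ℝ))) * m (closedBall 0 h) < c := hδ' ⟨hh, hlt⟩
    have h2 : m (closedBall (0 : EuclideanSpace ℝ (Fin d)) h) =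
        ENNReal.ofReal (h ^ d) * (ENNReal.ofReal (h ^ (-(d : ℝ))) * m (closedBall 0 h)) := by
      rw [← mul_assoc, ← ENNReal.ofReal_mul (by positivity), Real.rpow_neg hh.le,
        Real.rpow_natCast, mul_inv_cancel₀ (by positivity)]
      simp
    rw [h2]
    calc _ ≤ ENNReal.ofReal (h ^ d) * c := by gcongr
      _ = ENNReal.ofReal (c.toReal * h ^ d) := by
        rw [ENNReal.ofReal_mul (by positivity), ENNReal.ofReal_toReal hc2.ne, mul_comm]
      _ ≤ _ := by
        apply ENNReal.ofReal_le_ofReal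
        gcongr
        exact le_add_of_nonneg_right (by positivity)
  · calc m (closedBall (0 : EuclideanSpace ℝ (Fin d)) h) ≤ m Set.univ :=
        measure_mono (Set.subset_univ _)
      _ = ENNReal.ofReal (m.real Set.univ) := by simp
      _ ≤ _ := by
        apply ENNReal.ofReal_le_ofReal
        have h3 : m.real Set.univ = m.real Set.univ / δ ^ d * δ ^ d := by
          field_simp
        calc m.real Set.univ = m.real Set.univ / δ ^ d * δ ^ d := h3
          _ ≤ (c.toReal + m.real Set.univ / δ ^ d) * h ^ d := by
            gcongr
            exact le_add_of_nonneg_left (by positivity)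

lemma bI_integrable (d : ℕ) (m : Measure (EuclideanSpace ℝ (Fin d))) [IsFiniteMeasure m]
    (R : ℝ) : Integrable (fun x : EuclideanSpace ℝ (Fin d) => bI d (R * ‖x‖) ^ 2) m := by
  have hc : Continuous (bI d) := continuous_iff_continuousAt.2 fun x =>
    (bI_hasDerivAt d x).continuousAt
  refine Integrable.of_bound (by fun_prop : Continuous _).aestronglyMeasurable (Real.pi ^ 2)
    (Eventually.of_forall fun x => ?_)
  rw [norm_pow]
  exact pow_le_pow_left₀ (norm_nonneg _) (bI_abs_le d _) 2

/-- Summation of the decay of `I` over the balls `‖x‖ ≤ 2^{k+1}/R`. -/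
lemma integral_upper (d : ℕ) (hd : 1 ≤ d) (m : Measure (EuclideanSpace ℝ (Fin d)))
    [IsFiniteMeasure m] {C : ℝ} (hC0 : 0 ≤ C) (hC : ∀ h : ℝ, 0 < h →
      m (closedBall (0 : EuclideanSpace ℝ (Fin d)) h) ≤ ENNReal.ofReal (C * h ^ d)) :
    ∃ K : ℝ, 0 ≤ K ∧ ∀ R : ℝ, 0 < R → R ^ d * ∫ x, bI d (R * ‖x‖) ^ 2 ∂m ≤ K := by
  obtain ⟨A, hA0, hA1, hA2⟩ := bI_decay d hd
  refine ⟨A * C * 2 ^ d * 2, by positivity, fun R hR => ?_⟩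
  set B : ℕ → Set (EuclideanSpace ℝ (Fin d)) := fun k => closedBall 0 (2 ^ (k + 1) / R) with hB
  set a : ℕ → ℝ := fun k => A / (2 ^ k) ^ (d + 1) with ha
  have hpt : ∀ x : EuclideanSpace ℝ (Fin d), ENNReal.ofReal (bI d (R * ‖x‖) ^ 2) ≤
      ∑' k, (B k).indicator (fun _ => ENNReal.ofReal (a k)) x := by
    intro x
    obtain ⟨k, hk, hk'⟩ : ∃ k, x ∈ B k ∧ bI d (R * ‖x‖) ^ 2 ≤ a k := by
      rcases le_total (R * ‖x‖) 1 with h | h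
      · refine ⟨0, ?_, by simpa [ha] using hA1 _⟩
        simp only [hB, mem_closedBall, dist_zero_right]
        rw [le_div_iff₀ hR]
        norm_num
        linarith
      · obtain ⟨k, hk1, hk2⟩ := exists_nat_pow_near h (one_lt_two : (1 : ℝ) < 2)
        refine ⟨k, ?_, ?_⟩
        · simp only [hB, mem_closedBall, dist_zero_right]
          rw [le_div_iff₀ hR]
          linarith
        · simp only [ha]
          rw [le_div_iff₀ (by positivity)]
          refine le_trans ?_ (hA2 (R * ‖x‖) (by linarith))
          gcongr
    refine le_trans ?_ (ENNReal.le_tsum k)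
    rw [Set.indicator_of_mem hk]
    exact ENNReal.ofReal_le_ofReal hk'
  have hmain : ENNReal.ofReal (∫ x, bI d (R * ‖x‖) ^ 2 ∂m) ≤
      ENNReal.ofReal (A * C * 2 ^ d * 2 / R ^ d) := by
    rw [ofReal_integral_eq_lintegral_ofReal (bI_integrable d m R)
      (Eventually.of_forall fun x => sq_nonneg _)]
    calc _ ≤ ∫⁻ x, ∑' k, (B k).indicator (fun _ => ENNReal.ofReal (a k)) x ∂m :=
          lintegral_mono hpt
      _ = ∑' k, ENNReal.ofReal (a k) * m (B k) := by
        rw [lintegral_tsum fun k =>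
          (measurable_const.indicator isClosed_closedBall.measurableSet).aemeasurable]
        exact tsum_congr fun k => lintegral_indicator_const isClosed_closedBall.measurableSet _
      _ ≤ ∑' k, ENNReal.ofReal (A * C * 2 ^ d / R ^ d * (1 / 2) ^ k) := by
        refine ENNReal.tsum_le_tsum fun k => ?_
        calc _ ≤ ENNReal.ofReal (a k) * ENNReal.ofReal (C * (2 ^ (k + 1) / R) ^ d) := by
              gcongr
              exact hC _ (by positivity)
          _ = _ := by
            rw [← ENNReal.ofReal_mul (by positivity)]
            congr 1
            simp only [ha]
            rw [div_pow, div_pow, pow_succ 2 k, mul_pow, pow_succ _ d]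
            field_simp
            simp
      _ = _ := by
        rw [← ENNReal.ofReal_tsum_of_nonneg (fun k => by positivity)
          (summable_geometric_two.mul_left _), tsum_mul_left, tsum_geometric_two]
        congr 1
        ring
  have h := (ENNReal.ofReal_le_ofReal_iff (by positivity)).1 hmain
  rw [le_div_iff₀ (by positivity)] at h
  linarith

/-- Only the ball `‖x‖ ≤ 1/R`, where `I(R‖x‖)²` is bounded below, is used. -/
lemma integral_lower (d : ℕ) (m : Measure (EuclideanSpace ℝ (Fin d))) [IsFiniteMeasure m]
    (hlow : 0 < Filter.liminf
      (fun h : ℝ => ENNReal.ofReal (h ^ (-(d : ℝ))) *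
        m (closedBall (0 : EuclideanSpace ℝ (Fin d)) h)) (𝓝[>] (0 : ℝ))) :
    ∃ c : ℝ≥0∞, 0 < c ∧ ∀ᶠ R : ℝ in atTop,
      c ≤ ENNReal.ofReal (R ^ d * ∫ x, bI d (R * ‖x‖) ^ 2 ∂m) := by
  obtain ⟨b, hb0, hb⟩ := bI_lower d
  obtain ⟨c, hc1, hc2⟩ := exists_between hlow
  have hev := tendsto_inv_atTop_nhdsGT_zero.eventually (eventually_lt_of_lt_liminf hc2)
  refine ⟨ENNReal.ofReal b * c, ENNReal.mul_pos (by simpa using hb0) hc1.ne', ?_⟩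
  filter_upwards [hev, eventually_gt_atTop 0] with R h1 hR
  rw [Real.rpow_neg (by positivity), Real.inv_rpow hR.le, inv_inv, Real.rpow_natCast] at h1
  rw [ENNReal.ofReal_mul (by positivity), ofReal_integral_eq_lintegral_ofReal (bI_integrable d m R)
      (Eventually.of_forall fun x => sq_nonneg _)]
  calc ENNReal.ofReal b * c ≤ ENNReal.ofReal b * (ENNReal.ofReal (R ^ d) *
        m (closedBall (0 : EuclideanSpace ℝ (Fin d)) R⁻¹)) := by gcongr
    _ = ENNReal.ofReal (R ^ d) * ∫⁻ x in closedBall (0 : EuclideanSpace ℝ (Fin d)) R⁻¹,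
          ENNReal.ofReal b ∂m := by
        rw [setLIntegral_const]
        ring
    _ ≤ ENNReal.ofReal (R ^ d) * ∫⁻ x in closedBall (0 : EuclideanSpace ℝ (Fin d)) R⁻¹,
          ENNReal.ofReal (bI d (R * ‖x‖) ^ 2) ∂m := by
        gcongr ENNReal.ofReal (R ^ d) * ?_
        refine setLIntegral_mono'
          (isClosed_closedBall (x := (0 : EuclideanSpace ℝ (Fin d)))).measurableSet fun x hx => ?_
        refine ENNReal.ofReal_le_ofReal (hb _ ?_)
        rw [mem_closedBall, dist_zero_right] at hx
        rw [abs_of_nonneg (by positivity)]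
        calc R * ‖x‖ ≤ R * R⁻¹ := by gcongr
          _ = 1 := mul_inv_cancel₀ hR.ne'
    _ ≤ _ := by
        gcongr
        exact Measure.restrict_le_self

lemma measure_zero_eq (d : ℕ) (hd : 1 ≤ d) (m : Measure (EuclideanSpace ℝ (Fin d)))
    {C : ℝ} (hC : ∀ h : ℝ, 0 < h →
      m (closedBall (0 : EuclideanSpace ℝ (Fin d)) h) ≤ ENNReal.ofReal (C * h ^ d)) :
    m {0} = 0 := by
  have ht : Tendsto (fun h : ℝ => ENNReal.ofReal (C * h ^ d)) (𝓝[>] 0) (𝓝 0) := by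
    have : Continuous fun h : ℝ => ENNReal.ofReal (C * h ^ d) :=
      ENNReal.continuous_ofReal.comp (by fun_prop)
    have h2 := this.tendsto 0
    rw [zero_pow (by omega), mul_zero, ENNReal.ofReal_zero] at h2
    exact h2.mono_left nhdsWithin_le_nhds
  refine le_antisymm (ge_of_tendsto ht ?_) (zero_le)
  filter_upwards [self_mem_nhdsWithin] with h hh
  have hh0 : (0 : ℝ) < h := hh
  refine (measure_mono ?_).trans (hC h hh0)
  simpa using hh0.le

/-! ### Growth of the variance -/

/-- Maruyama's condition. Let `m` be a finite Borel measure on `ℝ^d`, let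
`Ψ̂(h) = m(B_h)` and `V(R) = (2πR)^d ∫_{ℝ^d∖{0}} ‖x‖^{-d} J_{d/2}(R‖x‖)² m(dx)`.
If `0 < liminf_{h↓0} h^{-d} Ψ̂(h) ≤ limsup_{h↓0} h^{-d} Ψ̂(h) < ∞`, then
`0 < liminf_{R→∞} R^{-d} V(R) ≤ limsup_{R→∞} R^{-d} V(R) < ∞`. -/
theorem stmt_13 (d : ℕ) (hd : 1 ≤ d)
    (m : Measure (EuclideanSpace ℝ (Fin d))) [IsFiniteMeasure m]
    (hlow : 0 < Filter.liminf
      (fun h : ℝ => ENNReal.ofReal (h ^ (-(d : ℝ))) *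
        m (closedBall (0 : EuclideanSpace ℝ (Fin d)) h)) (𝓝[>] (0 : ℝ)))
    (hup : Filter.limsup
      (fun h : ℝ => ENNReal.ofReal (h ^ (-(d : ℝ))) *
        m (closedBall (0 : EuclideanSpace ℝ (Fin d)) h)) (𝓝[>] (0 : ℝ)) < ⊤) :
    0 < Filter.liminf
      (fun R : ℝ => ENNReal.ofReal (R ^ (-(d : ℝ)) *
        ((2 * Real.pi * R) ^ d *
          ∫ x in ({0}ᶜ : Set (EuclideanSpace ℝ (Fin d))),
            ‖x‖ ^ (-(d : ℝ)) * besselJ ((d : ℝ) / 2) (R * ‖x‖) ^ 2 ∂m))) atTop ∧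
    Filter.limsup
      (fun R : ℝ => ENNReal.ofReal (R ^ (-(d : ℝ)) *
        ((2 * Real.pi * R) ^ d *
          ∫ x in ({0}ᶜ : Set (EuclideanSpace ℝ (Fin d))),
            ‖x‖ ^ (-(d : ℝ)) * besselJ ((d : ℝ) / 2) (R * ‖x‖) ^ 2 ∂m))) atTop < ⊤ := by
  obtain ⟨C, hC0, hC⟩ := measure_upper d m hup
  have h0 := measure_zero_eq d hd m hC
  obtain ⟨K, hK0, hK⟩ := integral_upper d hd m hC0 hC
  obtain ⟨c, hc, hcR⟩ := integral_lower d m hlow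
  set Q := Real.pi ^ d / (Real.sqrt Real.pi * Real.Gamma ((d : ℝ) / 2 + 1 / 2)) ^ 2 with hQ
  have hQ0 : 0 < Q := by
    have : 0 < Real.Gamma ((d : ℝ) / 2 + 1 / 2) := Real.Gamma_pos_of_pos (by positivity)
    have := Real.pi_pos
    positivity
  constructor
  · refine lt_of_lt_of_le (b := ENNReal.ofReal Q * c)
      (ENNReal.mul_pos (by simpa using hQ0) hc.ne') ?_
    refine le_liminf_of_le (by isBoundedDefault) ?_
    filter_upwards [hcR, eventually_gt_atTop 0] with R h1 hR
    rw [variance_eq d m h0 hR, ← hQ, ENNReal.ofReal_mul hQ0.le]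
    gcongr
  · refine lt_of_le_of_lt (b := ENNReal.ofReal (Q * K)) ?_ ENNReal.ofReal_lt_top
    refine limsup_le_of_le (by isBoundedDefault) ?_
    filter_upwards [eventually_gt_atTop 0] with R hR
    rw [variance_eq d m h0 hR, ← hQ]
    apply ENNReal.ofReal_le_ofReal
    exact mul_le_mul_of_nonneg_left (hK R hR) hQ0.le
end
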